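/- Let f, g ∈ H_a^∞ and define f(A) := (1/(2πi)) ∫_{Γ_{θ,ε}} f(λ) R(λ) dλ for any contour Γ_{θ,ε} ⊆ Σ_δ ∪ {z : |z| < r} (the integral converges absolutely in operator norm and is independent of the contour), and similarly g(A) and (f·g)(A), where (f·g)(λ) = f(λ) g(λ). Then (f·g)(A) = f(A) ∘ g(A). -/

import Mathlib

open Filter Topology MeasureTheory Set

noncomputable section

/-- Parametrization of the contour `Γ_{θ,ε}`: for `ε = 0` two rays
`t ↦ |t| e^{∓iθ}`, and for `ε > 0` the two rays `{ρ e^{±iθ} : ρ ≥ ε}` joined by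
the arc of the circle of radius `ε` through `-ε`, run from argument `-θ` to `θ`. -/
def gammaCurve (θ ε t : ℝ) : ℂ :=
  if t ≤ -ε then (-t : ℂ) * Complex.exp (-(θ : ℂ) * Complex.I)
  else if t < ε then
    (ε : ℂ) * Complex.exp (Complex.I * ((-(t * (Real.pi - θ) / ε) - Real.pi : ℝ) : ℂ))
  else (t : ℂ) * Complex.exp ((θ : ℂ) * Complex.I)

/-- The (piecewise) derivative of the parametrization `t ↦ gammaCurve θ ε t`. -/
def gammaDeriv (θ ε t : ℝ) : ℂ :=
  if t ≤ -ε then -Complex.exp (-(θ : ℂ) * Complex.I)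
  else if t < ε then
    -Complex.I * ((Real.pi - θ : ℝ) : ℂ) *
      Complex.exp (Complex.I * ((-(t * (Real.pi - θ) / ε) - Real.pi : ℝ) : ℂ))
  else Complex.exp ((θ : ℂ) * Complex.I)

/-- The open region to the right of the contour `Γ_{θ,ε}`. -/
def gammaPlus (θ ε : ℝ) : Set ℂ :=
  {w : ℂ | ∃ (t x : ℝ), 0 < x ∧ w = gammaCurve θ ε t + (x : ℂ)}

/-- The open region to the left of the contour `Γ_{θ,ε}`. -/
def gammaMinus (θ ε : ℝ) : Set ℂ :=
  {w : ℂ | ∃ (t x : ℝ), x < 0 ∧ w = gammaCurve θ ε t + (x : ℂ)}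

/-- The class `H_a^∞` of admissible holomorphic functions on the left half-plane. -/
structure MemHaInf (f : ℂ → ℂ) : Prop where
  holo : DifferentiableOn ℂ f {z : ℂ | z.re < 0}
  bdd : ∃ M : ℝ, ∀ z : ℂ, z.re < 0 → ‖f z‖ ≤ M
  lineIntPlus : ∀ x : ℝ, x ≤ 0 → ∀ θ : ℝ, Real.pi / 2 < θ → θ < Real.pi →
    IntegrableOn
      (fun r : ℝ => ‖f ((x : ℂ) + (r : ℂ) * Complex.exp ((θ : ℂ) * Complex.I))‖)
      (Set.Ioi 0)
  lineIntMinus : ∀ x : ℝ, x ≤ 0 → ∀ θ : ℝ, Real.pi / 2 < θ → θ < Real.pi →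
    IntegrableOn
      (fun r : ℝ => ‖f ((x : ℂ) + (r : ℂ) * Complex.exp (-(θ : ℂ) * Complex.I))‖)
      (Set.Ioi 0)

/-- The sector `Σ_δ = {λ ≠ 0 : |arg λ| < π/2 + δ}`. -/
def sigmaSet (δ : ℝ) : Set ℂ :=
  {z : ℂ | z ≠ 0 ∧ |Complex.arg z| < Real.pi / 2 + δ}

/-- The domain `Σ_δ ∪ {z : |z| < r}` of the pseudo-resolvent. -/
def resDom (δ r : ℝ) : Set ℂ := sigmaSet δ ∪ {z : ℂ | ‖z‖ < r}

variable {X : Type*} [NormedAddCommGroup X] [NormedSpace ℂ X] [CompleteSpace X]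

/-- A holomorphic pseudo-resolvent on `Σ_δ ∪ {|z| < r}` with the bound
`‖R(λ)‖ ≤ C/|λ|` on `Σ_δ`, bounded near `0`. -/
structure IsPseudoResolvent (R : ℂ → X →L[ℂ] X) (δ r C : ℝ) : Prop where
  hδ0 : 0 < δ
  hδ : δ < Real.pi / 2
  hr : 0 < r
  hC : 0 < C
  pseudo : ∀ lam mu : ℂ, lam ∈ resDom δ r → mu ∈ resDom δ r →
    R lam - R mu = (mu - lam) • (R lam).comp (R mu)
  holo : DifferentiableOn ℂ R (resDom δ r)
  bound : ∀ lam ∈ sigmaSet δ, ‖R lam‖ ≤ C / ‖lam‖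
  boundBall : ∃ M : ℝ, ∀ z : ℂ, ‖z‖ < r → ‖R z‖ ≤ M

/-
Choose `π/2 < θ₀ < θ` and write `f(A)` over `Γ_θ`, `g(A)` over `Γ_{θ₀}`. The resolvent identity
turns the product of the two integrals into a double integral which Fubini splits into
`∫ f(λ) R(λ) ∫ g(μ)/(μ - λ) dμ dλ` and `∫ g(μ) R(μ) ∫ f(λ)/(λ - μ) dλ dμ`. By Cauchy's theorem the
first inner integral is `2πi g(λ)`, as `λ` lies to the left of `Γ_{θ₀}`, and the second vanishes.

Everything rests on contour deformation for functions which are bounded in a sector but integrable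
only along its boundary rays. In the coordinate `z = exp w` a ray is a horizontal line, and once the
function is damped by an exponential decaying in the sector, Cauchy's theorem on a horizontal strip
applies. Fubini is available because `|λ - μ| ≥ c (|λ| + |μ|) ≥ 2c |λ|^{1/2} |μ|^{1/2}`, which
leaves the integrable weights `|λ|^{-1/2}` and `|μ|^{-1/2}`.
-/

section Development

open Complex Bornology
open scoped Real Interval

section Strip

variable {E : Type*} [NormedAddCommGroup E] [NormedSpace ℂ E] {G : ℂ → E} {y₁ y₂ : ℝ}

theorem tendsto_integral_vertical_of_tendsto {l : Filter ℝ}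
    (hG : Tendsto G (comap re l ⊓ 𝓟 (im ⁻¹' [[y₁, y₂]])) (𝓝 0)) :
    Tendsto (fun x : ℝ => ∫ y in y₁..y₂, G (x + y * I)) l (𝓝 0) := by
  refine Metric.tendsto_nhds.2 fun ε hε => ?_
  have hη : 0 < ε / (|y₂ - y₁| + 1) := by positivity
  have hsmall := hG.eventually (Metric.ball_mem_nhds 0 hη)
  rw [eventually_inf_principal, eventually_comap] at hsmall
  filter_upwards [hsmall] with x hx
  have hbound : ∀ y ∈ Ι y₁ y₂, ‖G (x + y * I)‖ ≤ ε / (|y₂ - y₁| + 1) := fun y hy =>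
    (mem_ball_zero_iff.1 <| hx _ (by simp) (by simpa using uIoc_subset_uIcc hy)).le
  calc dist (∫ y in y₁..y₂, G (x + y * I)) 0 ≤ ε / (|y₂ - y₁| + 1) * |y₂ - y₁| := by
        simpa using intervalIntegral.norm_integral_le_of_norm_le_const hbound
    _ < ε / (|y₂ - y₁| + 1) * (|y₂ - y₁| + 1) := by gcongr; exact lt_add_one _
    _ = ε := div_mul_cancel₀ _ (by positivity)

theorem integral_Iic_sub_eq_vertical {b : ℝ}
    (hG : DifferentiableOn ℂ G (Iic b ×ℂ [[y₁, y₂]]))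
    (hbot : Tendsto G (comap re atBot ⊓ 𝓟 (im ⁻¹' [[y₁, y₂]])) (𝓝 0))
    (h₁ : IntegrableOn (fun x : ℝ => G (x + y₁ * I)) (Iic b))
    (h₂ : IntegrableOn (fun x : ℝ => G (x + y₂ * I)) (Iic b)) :
    (∫ x in Iic b, G (x + y₂ * I)) - ∫ x in Iic b, G (x + y₁ * I) =
      I • ∫ y in y₁..y₂, G (b + y * I) := by
  have hrect : ∀ᶠ a in atBot, (∫ x in a..b, G (x + y₂ * I)) - (∫ x in a..b, G (x + y₁ * I)) =
      I • (∫ y in y₁..y₂, G (b + y * I)) - I • ∫ y in y₁..y₂, G (a + y * I) := by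
    filter_upwards [eventually_le_atBot b] with a ha
    have := integral_boundary_rect_eq_zero_of_differentiableOn G (a + y₁ * I) (b + y₂ * I)
      (hG.mono fun z hz => by
        simp only [mem_reProdIm, add_re, ofReal_re, mul_re, I_re, mul_zero, ofReal_im, I_im,
          mul_one, sub_self, add_zero, add_im, mul_im, zero_add, uIcc_of_le ha] at hz
        exact ⟨hz.1.2, hz.2⟩)
    simp only [add_re, ofReal_re, mul_re, I_re, mul_zero, ofReal_im, I_im, mul_one, sub_self,
      add_zero, add_im, mul_im, zero_add] at this
    rw [← sub_eq_zero, ← neg_eq_zero, ← this]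
    abel
  refine tendsto_nhds_unique ((intervalIntegral_tendsto_integral_Iic b h₂ tendsto_id).sub
    (intervalIntegral_tendsto_integral_Iic b h₁ tendsto_id))
    (Tendsto.congr' (hrect.mono fun a ha => ha.symm) ?_)
  simpa using ((tendsto_integral_vertical_of_tendsto hbot).const_smul I).const_sub
    (I • ∫ y in y₁..y₂, G (b + y * I))

theorem integral_horizontal_eq_of_tendsto
    (hG : DifferentiableOn ℂ G (im ⁻¹' [[y₁, y₂]]))
    (hbot : Tendsto G (comap re atBot ⊓ 𝓟 (im ⁻¹' [[y₁, y₂]])) (𝓝 0))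
    (htop : Tendsto G (comap re atTop ⊓ 𝓟 (im ⁻¹' [[y₁, y₂]])) (𝓝 0))
    (h₁ : Integrable (fun x : ℝ => G (x + y₁ * I)))
    (h₂ : Integrable (fun x : ℝ => G (x + y₂ * I))) :
    ∫ x : ℝ, G (x + y₁ * I) = ∫ x : ℝ, G (x + y₂ * I) := by
  have hcover : AECover volume atTop fun b : ℝ => Iic b := aecover_Iic tendsto_id
  refine (sub_eq_zero.1 <| tendsto_nhds_unique
    ((hcover.integral_tendsto_of_countably_generated h₂).sub
      (hcover.integral_tendsto_of_countably_generated h₁)) ?_).symm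
  simp only [fun b : ℝ => integral_Iic_sub_eq_vertical (hG.mono fun _ hw => hw.2) hbot
    (h₁.integrableOn (s := Iic b)) h₂.integrableOn]
  simpa using (tendsto_integral_vertical_of_tendsto htop).const_smul I

end Strip

section Ray

variable {E : Type*} [NormedAddCommGroup E] [NormedSpace ℂ E] {F : ℂ → E}

/-- The sector of all nonzero complex numbers having an argument in `s`. The argument is not
normalized, so that sectors around the negative real axis are given by intervals around `π`. -/
def sector (s : Set ℝ) : Set ℂ := exp '' (im ⁻¹' s)

/-- Integrability along the ray `{t e^{iφ} : t > 0}`. -/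
def RayIntegrable (F : ℂ → E) (φ : ℝ) : Prop :=
  IntegrableOn (fun t : ℝ => F (t * exp (φ * I))) (Ioi 0)

/-- The line integral along the ray `{t e^{iφ} : t > 0}`, run from `0` to `∞`. -/
def rayIntegral (F : ℂ → E) (φ : ℝ) : E :=
  ∫ t in Ioi (0 : ℝ), exp (φ * I) • F (t * exp (φ * I))

/-- The pullback of the differential form `F(z) dz` under the exponential map, which turns sectors
into horizontal strips and rays into horizontal lines. -/
def expPullback (F : ℂ → E) (w : ℂ) : E := exp w • F (exp w)

theorem exp_smul_expPullback_eq (F : ℂ → E) (φ x : ℝ) :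
    |Real.exp x| • (exp (φ * I) • F (Real.exp x * exp (φ * I))) = expPullback F (x + φ * I) := by
  rw [expPullback, exp_add, ofReal_exp, abs_of_pos (Real.exp_pos x), ← Complex.coe_smul, smul_smul,
    ofReal_exp]

theorem setIntegral_expPullback (F : ℂ → E) (φ : ℝ) {s : Set ℝ} (hs : MeasurableSet s) :
    ∫ x in s, expPullback F (x + φ * I) =
      ∫ t in Real.exp '' s, exp (φ * I) • F (t * exp (φ * I)) := by
  rw [integral_image_eq_integral_abs_deriv_smul hs
    (fun x _ => (Real.hasDerivAt_exp x).hasDerivWithinAt) Real.exp_injective.injOn]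
  simp only [exp_smul_expPullback_eq]

theorem integral_expPullback (F : ℂ → E) (φ : ℝ) :
    ∫ x : ℝ, expPullback F (x + φ * I) = rayIntegral F φ := by
  simpa [Real.range_exp, rayIntegral] using setIntegral_expPullback F φ MeasurableSet.univ

theorem RayIntegrable.integrableOn_exp_smul {φ : ℝ} (hF : RayIntegrable F φ) :
    IntegrableOn (fun t : ℝ => exp (φ * I) • F (t * exp (φ * I))) (Ioi 0) :=
  Integrable.smul (exp (φ * I)) hF

theorem RayIntegrable.expPullback {φ : ℝ} (hF : RayIntegrable F φ) :
    Integrable (fun x : ℝ => expPullback F (x + φ * I)) := by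
  have := (integrableOn_image_iff_integrableOn_abs_deriv_smul MeasurableSet.univ
    (fun x _ => (Real.hasDerivAt_exp x).hasDerivWithinAt) Real.exp_injective.injOn
    fun t : ℝ => exp (φ * I) • F (t * exp (φ * I))).1
    (by simpa [Real.range_exp] using hF.integrableOn_exp_smul)
  simpa only [exp_smul_expPullback_eq, integrableOn_univ] using this

theorem tendsto_expPullback {s : Set ℝ} {l : Filter ℝ} {m : Filter ℂ}
    (hl : Tendsto exp (comap re l) m)
    (hF : Tendsto (fun z => z • F z) (m ⊓ 𝓟 (sector s)) (𝓝 0)) :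
    Tendsto (expPullback F) (comap re l ⊓ 𝓟 (im ⁻¹' s)) (𝓝 0) :=
  hF.comp (hl.inf (tendsto_principal_principal.2 fun _ hw => mem_image_of_mem exp hw))

theorem differentiableOn_expPullback {s : Set ℂ} {t : Set ℂ} (hF : DifferentiableOn ℂ F s)
    (h : MapsTo exp t s) : DifferentiableOn ℂ (expPullback F) t :=
  differentiable_exp.differentiableOn.smul (hF.comp differentiable_exp.differentiableOn h)

theorem rayIntegral_eq_of_tendsto {α β : ℝ} (hF : DifferentiableOn ℂ F (sector [[α, β]]))
    (hzero : Tendsto (fun z => z • F z) (𝓝[≠] 0 ⊓ 𝓟 (sector [[α, β]])) (𝓝 0))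
    (hinf : Tendsto (fun z => z • F z) (cobounded ℂ ⊓ 𝓟 (sector [[α, β]])) (𝓝 0))
    (hα : RayIntegrable F α) (hβ : RayIntegrable F β) :
    rayIntegral F α = rayIntegral F β := by
  simpa only [integral_expPullback] using integral_horizontal_eq_of_tendsto
    (differentiableOn_expPullback hF (mapsTo_image exp _))
    (tendsto_expPullback tendsto_exp_comap_re_atBot_nhdsNE hzero)
    (tendsto_expPullback tendsto_exp_comap_re_atTop hinf) hα.expPullback hβ.expPullback

theorem re_exp_mul_exp_neg (w : ℂ) (ψ : ℝ) :
    (exp w * exp (-(ψ * I))).re = ‖exp w‖ * Real.cos (w.im - ψ) := by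
  rw [← exp_add, exp_re, norm_exp]
  simp [sub_eq_add_neg]

theorem cos_mul_norm_le_re_of_mem_sector {α β : ℝ} (h : |β - α| ≤ 2 * π) {z : ℂ}
    (hz : z ∈ sector [[α, β]]) :
    Real.cos ((β - α) / 2) * ‖z‖ ≤ (z * exp (-(((α + β) / 2 : ℝ) * I))).re := by
  obtain ⟨w, hw, rfl⟩ := hz
  rw [re_exp_mul_exp_neg, mul_comm]
  gcongr
  rw [← Real.cos_abs, ← Real.cos_abs (w.im - _)]
  have hw' : |w.im - (α + β) / 2| ≤ |(β - α) / 2| := by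
    have hle := le_abs_self ((β - α) / 2)
    have hge := neg_le_abs ((β - α) / 2)
    rcases mem_uIcc.1 hw with ⟨h₁, h₂⟩ | ⟨h₁, h₂⟩ <;>
      exact abs_le.2 ⟨by linarith, by linarith⟩
  exact Real.cos_le_cos_of_nonneg_of_le_pi (abs_nonneg _)
    (by rw [abs_div, abs_two]; linarith) hw'

theorem mul_exp_mem_sector {s : Set ℝ} {φ t : ℝ} (hφ : φ ∈ s) (ht : 0 < t) :
    (t * exp (φ * I) : ℂ) ∈ sector s :=
  ⟨Real.log t + φ * I, by simpa using hφ, by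
    rw [exp_add, ← ofReal_exp, Real.exp_log ht]⟩

theorem norm_ofReal_mul_exp {φ t : ℝ} (ht : 0 ≤ t) : ‖(t * exp (φ * I) : ℂ)‖ = t := by
  rw [norm_mul, norm_exp_ofReal_mul_I, mul_one, norm_real, Real.norm_of_nonneg ht]

section Damping

variable {S : Set ℂ} {u : ℂ} {c M : ℝ}

theorem norm_exp_neg_mul_le_one {η : ℝ} {z : ℂ} (hη : 0 ≤ η) (hz : 0 ≤ (z * u).re) :
    ‖exp (-(η * (z * u)))‖ ≤ 1 := by
  rw [norm_exp, Real.exp_le_one_iff, neg_re, re_ofReal_mul]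
  exact neg_nonpos.2 (mul_nonneg hη hz)

theorem tendsto_smul_damped {l : Filter ℂ} {m : Filter ℝ}
    (hS : ∀ z ∈ S, c * ‖z‖ ≤ (z * u).re) (hF : ∀ z ∈ S, ‖F z‖ ≤ M) {η : ℝ} (hη : 0 < η)
    (hl : Tendsto (fun z : ℂ => ‖z‖) l m)
    (hm : Tendsto (fun x : ℝ => x * Real.exp (-(η * c) * x)) m (𝓝 0)) :
    Tendsto (fun z => z • exp (-(η * (z * u))) • F z) (l ⊓ 𝓟 S) (𝓝 0) := by
  have hbound : ∀ᶠ z in l ⊓ 𝓟 S,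
      ‖z • exp (-(η * (z * u))) • F z‖ ≤ ‖z‖ * Real.exp (-(η * c) * ‖z‖) * M := by
    refine eventually_inf_principal.2 (.of_forall fun z hz => ?_)
    rw [norm_smul, norm_smul, mul_assoc, norm_exp, neg_re, re_ofReal_mul]
    gcongr ‖z‖ * (Real.exp ?_ * ?_)
    · nlinarith [mul_le_mul_of_nonneg_left (hS z hz) hη.le]
    · exact hF z hz
  refine squeeze_zero_norm' hbound ?_
  simpa using ((hm.comp hl).mono_left inf_le_left).mul_const M

theorem RayIntegrable.damped {φ : ℝ} (hF : RayIntegrable F φ)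
    (hu : ∀ t : ℝ, 0 < t → 0 ≤ ((t * exp (φ * I) : ℂ) * u).re) {η : ℝ} (hη : 0 ≤ η) :
    RayIntegrable (fun z => exp (-(η * (z * u))) • F z) φ :=
  Integrable.bdd_smul hF 1 (by fun_prop) <| (ae_restrict_mem measurableSet_Ioi).mono fun t ht =>
    norm_exp_neg_mul_le_one hη (hu t ht)

theorem tendsto_rayIntegral_damped {φ : ℝ} (hF : RayIntegrable F φ)
    (hu : ∀ t : ℝ, 0 < t → 0 ≤ ((t * exp (φ * I) : ℂ) * u).re) :
    Tendsto (fun η : ℝ => rayIntegral (fun z => exp (-(η * (z * u))) • F z) φ) (𝓝[>] 0)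
      (𝓝 (rayIntegral F φ)) := by
  refine tendsto_integral_filter_of_dominated_convergence (fun t : ℝ => ‖F (t * exp (φ * I))‖)
    ?_ ?_ hF.norm ?_
  · filter_upwards [self_mem_nhdsWithin] with η hη
    exact (hF.damped hu (le_of_lt hη)).integrableOn_exp_smul.aestronglyMeasurable
  · filter_upwards [self_mem_nhdsWithin] with η hη
    refine (ae_restrict_mem measurableSet_Ioi).mono fun t ht => ?_
    rw [norm_smul, norm_exp_ofReal_mul_I, one_mul, norm_smul]
    exact mul_le_of_le_one_left (norm_nonneg _) (norm_exp_neg_mul_le_one (le_of_lt hη) (hu t ht))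
  · refine .of_forall fun t => ?_
    have hcont : Continuous fun η : ℝ =>
        exp (φ * I) • exp (-(η * (t * exp (φ * I) * u))) • F (t * exp (φ * I)) := by fun_prop
    simpa using (hcont.tendsto 0).mono_left nhdsWithin_le_nhds

end Damping

/- For a merely bounded integrand the arcs at infinity need not be negligible; they become so after
multiplication by `exp (-η z u)`, where `u` rotates the bisector onto the positive real axis. -/
theorem rayIntegral_eq_of_bounded {α β M : ℝ} (hαβ : |β - α| < π)
    (hF : DifferentiableOn ℂ F (sector [[α, β]])) (hM : ∀ z ∈ sector [[α, β]], ‖F z‖ ≤ M)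
    (hα : RayIntegrable F α) (hβ : RayIntegrable F β) :
    rayIntegral F α = rayIntegral F β := by
  set u : ℂ := exp (-(((α + β) / 2 : ℝ) * I))
  have hc : 0 < Real.cos ((β - α) / 2) := by
    obtain ⟨h₁, h₂⟩ := abs_lt.1 hαβ
    exact Real.cos_pos_of_mem_Ioo ⟨by linarith, by linarith⟩
  have hre : ∀ z ∈ sector [[α, β]], Real.cos ((β - α) / 2) * ‖z‖ ≤ (z * u).re := fun z hz =>
    cos_mul_norm_le_re_of_mem_sector (by linarith [Real.pi_pos]) hz
  have hray : ∀ φ ∈ [[α, β]], ∀ t : ℝ, 0 < t → 0 ≤ ((t * exp (φ * I) : ℂ) * u).re :=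
    fun φ hφ t ht => (by positivity : (0:ℝ) ≤ _).trans (hre _ (mul_exp_mem_sector hφ ht))
  refine tendsto_nhds_unique (tendsto_rayIntegral_damped hα (hray α left_mem_uIcc)) <|
    (tendsto_rayIntegral_damped hβ (hray β right_mem_uIcc)).congr' ?_
  filter_upwards [self_mem_nhdsWithin] with η hη
  refine (rayIntegral_eq_of_tendsto (DifferentiableOn.smul (by fun_prop) hF) ?_ ?_
    (hα.damped (hray α left_mem_uIcc) (le_of_lt hη))
    (hβ.damped (hray β right_mem_uIcc) (le_of_lt hη))).symm
  · refine tendsto_smul_damped hre hM hη (m := 𝓝 0) ?_ ?_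
    · simpa using (continuous_norm.tendsto (0 : ℂ)).mono_left nhdsWithin_le_nhds
    · exact Continuous.tendsto' (by fun_prop) _ _ (by simp)
  · refine tendsto_smul_damped hre hM hη tendsto_norm_cobounded_atTop ?_
    simpa using tendsto_rpow_mul_exp_neg_mul_atTop_nhds_zero 1 _ (mul_pos hη hc)

end Ray

section Separation

theorem mul_sq_norm_add_norm_le_sq_norm_sub {V : Type*} [NormedAddCommGroup V]
    [InnerProductSpace ℝ V] {x y : V} {k : ℝ} (hk : -1 ≤ k)
    (hxy : inner ℝ x y ≤ k * (‖x‖ * ‖y‖)) :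
    (1 - k) / 2 * (‖x‖ + ‖y‖) ^ 2 ≤ ‖x - y‖ ^ 2 := by
  rw [norm_sub_sq_real]
  nlinarith [mul_nonneg (by linarith : 0 ≤ 1 + k) (sq_nonneg (‖x‖ - ‖y‖))]

theorem mul_norm_exp_add_norm_exp_le_norm_sub {v w : ℂ} {k : ℝ} (hk : -1 ≤ k)
    (hvw : Real.cos (v.im - w.im) ≤ k) :
    √((1 - k) / 2) * (‖exp v‖ + ‖exp w‖) ≤ ‖exp v - exp w‖ := by
  have hinner : inner ℝ (exp v) (exp w) ≤ k * (‖exp v‖ * ‖exp w‖) := by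
    have : inner ℝ (exp v) (exp w) = ‖exp v‖ * ‖exp w‖ * Real.cos (v.im - w.im) := by
      simp only [Complex.inner, mul_re, conj_re, conj_im, exp_re, exp_im, norm_exp, Real.cos_sub]
      ring
    rw [this, mul_comm]
    gcongr
  have hsq := mul_sq_norm_add_norm_le_sq_norm_sub hk hinner
  calc √((1 - k) / 2) * (‖exp v‖ + ‖exp w‖)
      = √((1 - k) / 2 * (‖exp v‖ + ‖exp w‖) ^ 2) := by
        rw [Real.sqrt_mul' _ (sq_nonneg _), Real.sqrt_sq (by positivity)]
    _ ≤ ‖exp v - exp w‖ := Real.sqrt_le_iff.2 ⟨norm_nonneg _, hsq⟩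

end Separation

section DoublePole

theorem integrable_inv_sq_add_sq {ρ : ℝ} (hρ : ρ ≠ 0) :
    Integrable fun t : ℝ => (t ^ 2 + ρ ^ 2)⁻¹ := by
  have := (integrable_inv_one_add_sq.comp_mul_left' (inv_ne_zero hρ)).const_mul (ρ ^ 2)⁻¹
  refine this.congr (.of_forall fun t => ?_)
  simp only
  rw [← mul_inv]
  congr 1
  field_simp
  ring

theorem integral_Ioi_inv_sq_add_sq {ρ : ℝ} (hρ : 0 < ρ) :
    ∫ t in Ioi (0 : ℝ), (t ^ 2 + ρ ^ 2)⁻¹ = π / (2 * ρ) := by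
  have hscale : ∀ t : ℝ, (t ^ 2 + ρ ^ 2)⁻¹ = (ρ ^ 2)⁻¹ * (1 + (ρ⁻¹ * t) ^ 2)⁻¹ := fun t => by
    rw [← mul_inv]
    congr 1
    field_simp
    ring
  simp_rw [hscale]
  rw [integral_const_mul, integral_comp_mul_left_Ioi (fun t => (1 + t ^ 2)⁻¹) 0 (inv_pos.2 hρ),
    mul_zero, integral_Ioi_inv_one_add_sq]
  simp only [Real.arctan_zero, sub_zero, inv_inv, smul_eq_mul]
  field_simp

/-- The scalar model for the Cauchy kernel at `l`: the second pole, at `-l`, makes it integrable at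
infinity along every ray that avoids the two poles. -/
def doublePole (l z : ℂ) : ℂ := (z - l)⁻¹ - (z + l)⁻¹

theorem doublePole_eq_div {l z : ℂ} (h : z ^ 2 ≠ l ^ 2) :
    doublePole l z = 2 * l / (z ^ 2 - l ^ 2) := by
  have h₁ : z - l ≠ 0 := fun h' => h (by rw [sub_eq_zero.1 h'])
  have h₂ : z + l ≠ 0 := fun h' => h (by rw [eq_neg_of_add_eq_zero_left h', neg_sq])
  rw [doublePole, inv_sub_inv h₁ h₂, sq_sub_sq]
  ring

theorem abs_sin_mul_le_norm_exp_sq_sub_exp_sq (v w : ℂ) :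
    |Real.sin (v.im - w.im)| * (‖exp v‖ ^ 2 + ‖exp w‖ ^ 2) ≤ ‖exp v ^ 2 - exp w ^ 2‖ := by
  have hk : (1 - Real.cos (2 * (v.im - w.im))) / 2 = Real.sin (v.im - w.im) ^ 2 := by
    rw [Real.cos_two_mul', Real.cos_sq']
    ring
  have := mul_norm_exp_add_norm_exp_le_norm_sub (v := 2 * v) (w := 2 * w)
    (Real.neg_one_le_cos (2 * (v.im - w.im))) (by simp [mul_sub])
  rw [hk, Real.sqrt_sq_eq_abs] at this
  simpa only [two_mul, exp_add, ← sq, norm_pow] using this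

theorem exp_sq_ne_exp_sq {v w : ℂ} (h : Real.sin (v.im - w.im) ≠ 0) : exp v ^ 2 ≠ exp w ^ 2 := by
  have hpos : 0 < |Real.sin (v.im - w.im)| * (‖exp v‖ ^ 2 + ‖exp w‖ ^ 2) := by
    have := exp_ne_zero v
    positivity
  exact sub_ne_zero.1 (norm_pos_iff.1 (hpos.trans_le (abs_sin_mul_le_norm_exp_sq_sub_exp_sq v w)))

theorem rayIntegrable_doublePole {w : ℂ} {φ : ℝ} (h : Real.sin (φ - w.im) ≠ 0) :
    RayIntegrable (doublePole (exp w)) φ := by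
  have hdom := (integrable_inv_sq_add_sq (norm_ne_zero_iff.2 (exp_ne_zero w))).const_mul
    (2 * ‖exp w‖ / |Real.sin (φ - w.im)|)
  refine hdom.integrableOn.mono' (by unfold doublePole; fun_prop) ?_
  refine (ae_restrict_mem measurableSet_Ioi).mono fun t ht => ?_
  obtain ⟨v, rfl : v.im = φ, hv⟩ := mul_exp_mem_sector (mem_singleton φ) ht
  have hsep := abs_sin_mul_le_norm_exp_sq_sub_exp_sq v w
  have hnorm : ‖exp v‖ = t := by rw [hv, norm_ofReal_mul_exp (le_of_lt ht)]
  rw [← hv, doublePole_eq_div (exp_sq_ne_exp_sq h), norm_div, norm_mul, Complex.norm_two,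
    div_mul_eq_mul_div, ← div_eq_mul_inv, div_div, mul_comm _ |_|, ← hnorm]
  have := exp_ne_zero v
  gcongr

theorem differentiableOn_doublePole {l : ℂ} {s : Set ℂ} (h : ∀ z ∈ s, z ^ 2 ≠ l ^ 2) :
    DifferentiableOn ℂ (doublePole l) s := by
  intro z hz
  have h₁ : z - l ≠ 0 := fun h' => h z hz (by rw [sub_eq_zero.1 h'])
  have h₂ : z + l ≠ 0 := fun h' => h z hz (by rw [eq_neg_of_add_eq_zero_left h', neg_sq])
  unfold doublePole
  fun_prop (disch := assumption)

theorem tendsto_smul_doublePole_nhds_zero {l : ℂ} (hl : l ≠ 0) :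
    Tendsto (fun z => z • doublePole l z) (𝓝 0) (𝓝 0) := by
  have : ContinuousAt (fun z => z • doublePole l z) 0 := by
    unfold doublePole
    fun_prop (disch := simpa)
  simpa using this.tendsto

theorem tendsto_smul_doublePole_cobounded (l : ℂ) :
    Tendsto (fun z => z • doublePole l z) (cobounded ℂ) (𝓝 0) := by
  have hinv : Tendsto (fun z => l * ((z - l)⁻¹ + (z + l)⁻¹)) (cobounded ℂ) (𝓝 0) := by
    simpa using ((tendsto_inv₀_cobounded.comp (tendsto_sub_const_cobounded l)).add
      (tendsto_inv₀_cobounded.comp (tendsto_add_const_cobounded l))).const_mul l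
  refine hinv.congr' ?_
  filter_upwards [eventually_ne_cobounded l, eventually_ne_cobounded (-l)] with z h₁ h₂
  have h₁ : z - l ≠ 0 := sub_ne_zero.2 h₁
  have h₂ : z + l ≠ 0 := by rwa [Ne, add_eq_zero_iff_eq_neg]
  simp only [doublePole, smul_eq_mul]
  field_simp
  ring

theorem rayIntegral_doublePole_eq {w : ℂ} {α β : ℝ}
    (h : ∀ y ∈ [[α, β]], Real.sin (y - w.im) ≠ 0) :
    rayIntegral (doublePole (exp w)) α = rayIntegral (doublePole (exp w)) β := by
  refine rayIntegral_eq_of_tendsto (differentiableOn_doublePole ?_)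
    ((tendsto_smul_doublePole_nhds_zero (exp_ne_zero w)).mono_left
      (inf_le_left.trans nhdsWithin_le_nhds))
    ((tendsto_smul_doublePole_cobounded _).mono_left inf_le_left)
    (rayIntegrable_doublePole (h α left_mem_uIcc)) (rayIntegrable_doublePole (h β right_mem_uIcc))
  rintro _ ⟨v, hv, rfl⟩
  exact exp_sq_ne_exp_sq (h v.im hv)

theorem exp_smul_doublePole_perpendicular (w : ℂ) (t : ℝ) :
    exp ((w.im - π / 2 : ℝ) * I) • doublePole (exp w) (t * exp ((w.im - π / 2 : ℝ) * I)) =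
      I * ((2 * ‖exp w‖ * (t ^ 2 + ‖exp w‖ ^ 2)⁻¹ : ℝ) : ℂ) := by
  have hρ : 0 < ‖exp w‖ := norm_pos_iff.2 (exp_ne_zero w)
  have hw : exp w = ‖exp w‖ * exp (w.im * I) := by
    rw [norm_exp, ofReal_exp, ← exp_add, re_add_im]
  have hperp : exp ((w.im - π / 2 : ℝ) * I) = -I * exp (w.im * I) := by
    rw [ofReal_sub, sub_mul, exp_sub]
    push_cast
    rw [exp_pi_div_two_mul_I, div_I]
    ring
  generalize ‖exp w‖ = ρ at hρ hw ⊢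
  generalize exp (w.im * I) = e at hw hperp
  have he : e ≠ 0 := right_ne_zero_of_mul (hw ▸ exp_ne_zero w)
  have hpos : ((t ^ 2 + ρ ^ 2 : ℝ) : ℂ) ≠ 0 := ofReal_ne_zero.2 (by positivity)
  have hsq : (t * (-I * e)) ^ 2 - (ρ * e) ^ 2 = -(e ^ 2 * ((t ^ 2 + ρ ^ 2 : ℝ) : ℂ)) := by
    push_cast
    linear_combination (t ^ 2 * e ^ 2 : ℂ) * I_sq
  have hne : (t * (-I * e)) ^ 2 ≠ (ρ * e) ^ 2 := by
    rw [← sub_ne_zero, hsq, neg_ne_zero]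
    exact mul_ne_zero (pow_ne_zero 2 he) hpos
  rw [hperp, hw, doublePole_eq_div hne, hsq]
  push_cast at hpos ⊢
  simp only [smul_eq_mul]
  field_simp

theorem rayIntegral_doublePole_perpendicular (w : ℂ) :
    rayIntegral (doublePole (exp w)) (w.im - π / 2) = π * I := by
  have hw : 0 < ‖exp w‖ := norm_pos_iff.2 (exp_ne_zero w)
  simp_rw [rayIntegral, exp_smul_doublePole_perpendicular]
  rw [integral_const_mul, integral_complex_ofReal, integral_const_mul,
    integral_Ioi_inv_sq_add_sq hw, mul_div_cancel₀ _ (by positivity), mul_comm]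

theorem rayIntegral_doublePole_add_pi (l : ℂ) (φ : ℝ) :
    rayIntegral (doublePole l) (φ + π) = -rayIntegral (doublePole l) φ := by
  have heven : ∀ z, doublePole l (-z) = doublePole l z := fun z => by
    rw [doublePole, doublePole, ← neg_add', neg_add_eq_sub, ← neg_sub z l, inv_neg, inv_neg]
    ring
  have hexp : exp ((φ + π : ℝ) * I) = -exp (φ * I) := by
    push_cast
    rw [add_mul, exp_add, exp_pi_mul_I, mul_neg_one]
  simp only [rayIntegral, hexp, mul_neg, heven, neg_smul, integral_neg]

/-- The contour integral along the boundary of the sector `{θ < arg z < 2π - θ}` of nonzero complex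
numbers, run with the sector on its left. -/
def sectorIntegral {E : Type*} [NormedAddCommGroup E] [NormedSpace ℂ E] (F : ℂ → E) (θ : ℝ) : E :=
  rayIntegral F θ - rayIntegral F (2 * π - θ)

theorem sectorIntegral_doublePole {w : ℂ} {θ : ℝ} (h₀ : π / 2 < θ)
    (hw : w.im ∈ Ioo θ (2 * π - θ)) : sectorIntegral (doublePole (exp w)) θ = 2 * π * I := by
  have hlower : rayIntegral (doublePole (exp w)) θ = π * I := by
    rw [← rayIntegral_doublePole_perpendicular w]
    refine rayIntegral_doublePole_eq fun y hy => (Real.sin_neg_of_neg_of_neg_pi_lt ?_ ?_).ne <;>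
      rcases mem_uIcc.1 hy with h | h <;> linarith [hw.1, hw.2, h.1, h.2, Real.pi_pos]
  have hupper : rayIntegral (doublePole (exp w)) (2 * π - θ) = -(π * I) := by
    rw [← rayIntegral_doublePole_perpendicular w, ← rayIntegral_doublePole_add_pi]
    refine rayIntegral_doublePole_eq fun y hy => (Real.sin_pos_of_pos_of_lt_pi ?_ ?_).ne' <;>
      rcases mem_uIcc.1 hy with h | h <;> linarith [hw.1, hw.2, h.1, h.2, Real.pi_pos]
  rw [sectorIntegral, hlower, hupper]
  ring

end DoublePole

section Cauchy

variable {E : Type*} [NormedAddCommGroup E] [NormedSpace ℂ E] {F : ℂ → E}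

theorem cos_lt_one_of_ne_zero {x : ℝ} (h₀ : x ≠ 0) (h : |x| < 2 * π) : Real.cos x < 1 :=
  (Real.cos_le_one x).lt_of_ne <|
    mt (Real.cos_eq_one_iff_of_lt_of_lt (abs_lt.1 h).1 (abs_lt.1 h).2).1 h₀

theorem exists_pos_mul_norm_add_norm_le_norm_sub {s t : Set ℝ} (hs : IsCompact s)
    (ht : IsCompact t) (hst : ∀ x ∈ s, ∀ y ∈ t, Real.cos (x - y) < 1) :
    ∃ c > 0, ∀ z ∈ sector s, ∀ q ∈ sector t, c * (‖z‖ + ‖q‖) ≤ ‖z - q‖ := by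
  rcases (s ×ˢ t).eq_empty_or_nonempty with hempty | hne
  · refine ⟨1, one_pos, ?_⟩
    rintro _ ⟨v, hv, rfl⟩ _ ⟨w, hw, rfl⟩
    exact (hempty.subset (mk_mem_prod hv hw)).elim
  · obtain ⟨m, hm, hmax⟩ := (hs.prod ht).exists_isMaxOn hne
      (f := fun p : ℝ × ℝ => Real.cos (p.1 - p.2)) (by fun_prop)
    refine ⟨√((1 - Real.cos (m.1 - m.2)) / 2), Real.sqrt_pos.2 ?_, ?_⟩
    · linarith [hst m.1 hm.1 m.2 hm.2]
    · rintro _ ⟨v, hv, rfl⟩ _ ⟨w, hw, rfl⟩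
      exact mul_norm_exp_add_norm_exp_le_norm_sub (Real.neg_one_le_cos _) (hmax (mk_mem_prod hv hw))

theorem RayIntegrable.smul_of_norm_le {c : ℂ → ℂ} {φ M : ℝ} (hF : RayIntegrable F φ)
    (hc : Measurable c) (hM : ∀ z ∈ sector {φ}, ‖c z‖ ≤ M) :
    RayIntegrable (fun z => c z • F z) φ :=
  Integrable.bdd_smul hF M (hc.comp (by fun_prop)).aestronglyMeasurable <|
    (ae_restrict_mem measurableSet_Ioi).mono fun _ ht => hM _ (mul_exp_mem_sector rfl ht)

theorem exists_norm_inv_sub_le {s : Set ℝ} (hs : IsCompact s) {w : ℂ}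
    (h : ∀ y ∈ s, Real.cos (y - w.im) < 1) :
    ∃ K, ∀ z ∈ sector s, z ≠ exp w ∧ ‖(z - exp w)⁻¹‖ ≤ K := by
  obtain ⟨c, hc, hsep⟩ := exists_pos_mul_norm_add_norm_le_norm_sub hs isCompact_singleton
    (t := {w.im}) (by simpa using h)
  have hw : 0 < ‖exp w‖ := norm_pos_iff.2 (exp_ne_zero w)
  refine ⟨(c * ‖exp w‖)⁻¹, fun z hz => ?_⟩
  have hle : c * ‖exp w‖ ≤ ‖z - exp w‖ := by
    refine le_trans ?_ (hsep z hz _ ⟨w, rfl, rfl⟩)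
    gcongr
    exact le_add_of_nonneg_left (norm_nonneg z)
  have hpos : 0 < c * ‖exp w‖ := mul_pos hc hw
  exact ⟨sub_ne_zero.1 (norm_pos_iff.1 (hpos.trans_le hle)), by rw [norm_inv]; gcongr⟩

theorem RayIntegrable.inv_sub_smul {φ : ℝ} {w : ℂ} (hF : RayIntegrable F φ)
    (h : Real.cos (φ - w.im) < 1) : RayIntegrable (fun z => (z - exp w)⁻¹ • F z) φ := by
  obtain ⟨K, hK⟩ := exists_norm_inv_sub_le isCompact_singleton (s := {φ}) (by simpa using h)
  exact hF.smul_of_norm_le (by fun_prop) fun z hz => (hK z hz).2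

theorem rayIntegral_inv_sub_smul_eq {α β M : ℝ} {w : ℂ} (hαβ : |β - α| < π)
    (hF : DifferentiableOn ℂ F (sector [[α, β]])) (hM : ∀ z ∈ sector [[α, β]], ‖F z‖ ≤ M)
    (hα : RayIntegrable F α) (hβ : RayIntegrable F β)
    (hw : ∀ y ∈ [[α, β]], Real.cos (y - w.im) < 1) :
    rayIntegral (fun z => (z - exp w)⁻¹ • F z) α =
      rayIntegral (fun z => (z - exp w)⁻¹ • F z) β := by
  obtain ⟨K, hK⟩ := exists_norm_inv_sub_le isCompact_uIcc hw
  refine rayIntegral_eq_of_bounded (M := K * M) hαβ ?_ (fun z hz => ?_)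
    (hα.inv_sub_smul (hw α left_mem_uIcc)) (hβ.inv_sub_smul (hw β right_mem_uIcc))
  · exact DifferentiableOn.smul (.inv (by fun_prop) fun z hz => sub_ne_zero.2 (hK z hz).1) hF
  · rw [norm_smul]
    exact mul_le_mul (hK z hz).2 (hM z hz) (norm_nonneg _) ((norm_nonneg _).trans (hK z hz).2)

theorem exists_norm_dslope_le {U : Set ℂ} (hU : IsOpen U) (hF : DifferentiableOn ℂ F U) {M : ℝ}
    (hM : ∀ z ∈ U, ‖F z‖ ≤ M) {l : ℂ} (hl : l ∈ U) : ∃ K, ∀ z ∈ U, ‖dslope F l z‖ ≤ K := by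
  have hcont : ContinuousAt (dslope F l) l :=
    continuousAt_dslope_same.2 (hF.differentiableAt (hU.mem_nhds hl))
  obtain ⟨r, hr, hnear⟩ := Metric.eventually_nhds_iff.1
    (hcont.norm.eventually (gt_mem_nhds (lt_add_one ‖dslope F l l‖)))
  refine ⟨max (‖dslope F l l‖ + 1) (r⁻¹ * (M + M)), fun z hz => ?_⟩
  rcases lt_or_ge (dist z l) r with hzr | hzr
  · exact le_max_of_le_left (hnear hzr).le
  · refine le_max_of_le_right ?_
    have hne : z ≠ l := dist_pos.1 (hr.trans_le hzr)
    rw [dslope_of_ne F hne, slope_def_module, norm_smul, norm_inv, ← dist_eq_norm]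
    gcongr
    exact (norm_sub_le _ _).trans (add_le_add (hM z hz) (hM l hl))

theorem re_neg_of_mem_sector {s : Set ℝ} (hs : s ⊆ Ioo (π / 2) (3 * π / 2)) {z : ℂ}
    (hz : z ∈ sector s) : z.re < 0 := by
  obtain ⟨w, hw, rfl⟩ := hz
  rw [exp_re]
  exact mul_neg_of_pos_of_neg (Real.exp_pos _)
    (Real.cos_neg_of_pi_div_two_lt_of_lt (hs hw).1 (by linarith [(hs hw).2]))

theorem norm_inv_add_le_of_re_neg {l z : ℂ} (hl : l.re < 0) (hz : z.re < 0) :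
    ‖(z + l)⁻¹‖ ≤ |l.re|⁻¹ := by
  have : |l.re| ≤ ‖z + l‖ := by
    refine le_trans ?_ (abs_re_le_norm _)
    rw [add_re, abs_of_neg hl, abs_of_neg (add_neg hz hl)]
    linarith
  rw [norm_inv]
  exact inv_anti₀ (abs_pos.2 hl.ne) this

theorem RayIntegrable.congr {E : Type*} [NormedAddCommGroup E] {F F' : ℂ → E} {φ : ℝ}
    (hF : RayIntegrable F φ) (h : EqOn F F' (sector {φ})) : RayIntegrable F' φ :=
  IntegrableOn.congr_fun hF (fun _ ht => h (mul_exp_mem_sector rfl ht)) measurableSet_Ioi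

theorem rayIntegral_congr {F' : ℂ → E} {φ : ℝ} (h : EqOn F F' (sector {φ})) :
    rayIntegral F φ = rayIntegral F' φ :=
  setIntegral_congr_fun measurableSet_Ioi fun _ ht =>
    congr_arg _ (h (mul_exp_mem_sector rfl ht))

theorem rayIntegral_sub {F' : ℂ → E} {φ : ℝ} (hF : RayIntegrable F φ) (hF' : RayIntegrable F' φ) :
    rayIntegral (fun z => F z - F' z) φ = rayIntegral F φ - rayIntegral F' φ := by
  simp only [rayIntegral, smul_sub]
  exact integral_sub hF.integrableOn_exp_smul hF'.integrableOn_exp_smul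

theorem rayIntegral_smul_const [CompleteSpace E] (c : ℂ → ℂ) (φ : ℝ) (x : E) :
    rayIntegral (fun z => c z • x) φ = rayIntegral c φ • x := by
  simp only [rayIntegral, ← integral_smul_const, smul_assoc]

theorem exists_bounded_eq_inv_sub_smul_sub_doublePole_smul [CompleteSpace E] {M : ℝ} {l : ℂ}
    (hl : l.re < 0) (hF : DifferentiableOn ℂ F {z | z.re < 0})
    (hM : ∀ z : ℂ, z.re < 0 → ‖F z‖ ≤ M) :
    ∃ (h : ℂ → E) (K : ℝ), DifferentiableOn ℂ h {z | z.re < 0} ∧ (∀ z : ℂ, z.re < 0 → ‖h z‖ ≤ K) ∧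
      ∀ z ≠ l, h z = (z - l)⁻¹ • F z - doublePole l z • F l := by
  have hopen : IsOpen {z : ℂ | z.re < 0} := isOpen_lt continuous_re continuous_const
  have hne : ∀ z ∈ {z : ℂ | z.re < 0}, z + l ≠ 0 := fun z hz h =>
    (add_neg (show z.re < 0 from hz) hl).ne (by rw [← add_re, h, zero_re])
  obtain ⟨K, hK⟩ := exists_norm_dslope_le hopen hF hM hl
  refine ⟨fun z => dslope F l z + (z + l)⁻¹ • F l, K + |l.re|⁻¹ * ‖F l‖, ?_, fun z hz => ?_,
    fun z hz => ?_⟩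
  · exact ((differentiableOn_dslope (hopen.mem_nhds hl)).2 hF).add
      ((DifferentiableOn.inv (by fun_prop) hne).smul_const _)
  · refine norm_add_le_of_le (hK z hz) ?_
    rw [norm_smul]
    gcongr
    exact norm_inv_add_le_of_re_neg hl hz
  · simp only [dslope_of_ne F hz, slope_def_module, doublePole]
    module

theorem sectorIntegral_inv_sub_smul [CompleteSpace E] {θ M : ℝ} {w : ℂ} (hθ : π / 2 < θ)
    (hF : DifferentiableOn ℂ F {z | z.re < 0}) (hM : ∀ z : ℂ, z.re < 0 → ‖F z‖ ≤ M)
    (h₁ : RayIntegrable F θ) (h₂ : RayIntegrable F (2 * π - θ)) (hw : w.im ∈ Ioo θ (2 * π - θ)) :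
    sectorIntegral (fun z => (z - exp w)⁻¹ • F z) θ = (2 * π * I : ℂ) • F (exp w) := by
  obtain ⟨hw₁, hw₂⟩ := hw
  have hsub : [[θ, 2 * π - θ]] ⊆ Ioo (π / 2) (3 * π / 2) := by
    rw [uIcc_of_le (by linarith)]
    exact fun y hy => ⟨by linarith [hy.1], by linarith [hy.2]⟩
  have hre : ∀ z ∈ sector [[θ, 2 * π - θ]], z.re < 0 := fun z => re_neg_of_mem_sector hsub
  have hl : (exp w).re < 0 := hre _ ⟨w, Icc_subset_uIcc ⟨hw₁.le, hw₂.le⟩, rfl⟩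
  obtain ⟨h, K, hdiff, hK, hh⟩ := exists_bounded_eq_inv_sub_smul_sub_doublePole_smul hl hF hM
  have hray : ∀ φ, RayIntegrable F φ → Real.cos (φ - w.im) < 1 → Real.sin (φ - w.im) ≠ 0 →
      RayIntegrable h φ ∧ rayIntegral h φ = rayIntegral (fun z => (z - exp w)⁻¹ • F z) φ -
        rayIntegral (doublePole (exp w)) φ • F (exp w) := fun φ hφ hcos hsin => by
    obtain ⟨_, hne⟩ := exists_norm_inv_sub_le (isCompact_singleton (x := φ)) (by simpa using hcos)
    have heq : EqOn (fun z => (z - exp w)⁻¹ • F z - doublePole (exp w) z • F (exp w)) h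
        (sector {φ}) := fun z hz => (hh z (hne z hz).1).symm
    have hker := hφ.inv_sub_smul hcos
    have hmod : RayIntegrable (fun z => doublePole (exp w) z • F (exp w)) φ :=
      Integrable.smul_const (rayIntegrable_doublePole hsin) _
    have hsub : RayIntegrable
        (fun z => (z - exp w)⁻¹ • F z - doublePole (exp w) z • F (exp w)) φ :=
      Integrable.sub hker hmod
    refine ⟨hsub.congr heq, ?_⟩
    rw [← rayIntegral_congr heq, rayIntegral_sub hker hmod, rayIntegral_smul_const]
  obtain ⟨hint₁, heq₁⟩ := hray θ h₁
    (cos_lt_one_of_ne_zero (by linarith) (abs_lt.2 ⟨by linarith, by linarith⟩))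
    (Real.sin_neg_of_neg_of_neg_pi_lt (by linarith) (by linarith)).ne
  obtain ⟨hint₂, heq₂⟩ := hray (2 * π - θ) h₂
    (cos_lt_one_of_ne_zero (by linarith) (abs_lt.2 ⟨by linarith, by linarith⟩))
    (Real.sin_pos_of_pos_of_lt_pi (by linarith) (by linarith)).ne'
  have hrot := rayIntegral_eq_of_bounded (abs_lt.2 ⟨by linarith, by linarith⟩)
    (hdiff.mono hre) (fun z hz => hK z (hre z hz)) hint₁ hint₂
  rw [heq₁, heq₂, sub_eq_sub_iff_sub_eq_sub, ← sub_smul] at hrot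
  rw [sectorIntegral, hrot, ← sectorIntegral_doublePole hθ ⟨hw₁, hw₂⟩, sectorIntegral]

end Cauchy

section Fubini

variable {S T E A : Type*} [MeasurableSpace S] [MeasurableSpace T] {μ : Measure S} {ν : Measure T}
  [NormedAddCommGroup E] [NormedSpace ℂ E] [NormedRing A]
  [NormedAlgebra ℂ A] {p : S → ℂ} {q : T → ℂ}

theorem norm_sqrt_norm_mul_sqrt_norm_div_sub_le {c : ℝ} {z w : ℂ} (hc : 0 < c)
    (h : c * (‖z‖ + ‖w‖) ≤ ‖z - w‖) : ‖((√‖z‖ * √‖w‖ : ℝ) : ℂ) / (z - w)‖ ≤ c⁻¹ := by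
  have hsqrt : √‖z‖ * √‖w‖ ≤ ‖z‖ + ‖w‖ := by
    nlinarith [sq_nonneg (√‖z‖ - √‖w‖), Real.sq_sqrt (norm_nonneg z), Real.sq_sqrt (norm_nonneg w),
      norm_nonneg z, norm_nonneg w]
  rw [norm_div, norm_real, Real.norm_of_nonneg (by positivity)]
  refine div_le_of_le_mul₀ (norm_nonneg _) (inv_nonneg.2 hc.le) (hsqrt.trans ?_)
  rwa [le_inv_mul_iff₀ hc]

theorem integrable_div_sub_smul {b : S → ℂ} {u : T → E} {c : ℝ} (hc : 0 < c)
    (hp : Measurable p) (hq : Measurable q)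
    (hb : Integrable (fun s => (√‖p s‖)⁻¹ • b s) μ) (hu : Integrable (fun t => (√‖q t‖)⁻¹ • u t) ν)
    (hsep : ∀ᵐ x ∂μ.prod ν, p x.1 ≠ 0 ∧ q x.2 ≠ 0 ∧
      c * (‖p x.1‖ + ‖q x.2‖) ≤ ‖p x.1 - q x.2‖) :
    Integrable (fun x => (b x.1 / (p x.1 - q x.2)) • u x.2) (μ.prod ν) := by
  refine ((hb.smul_prod hu).bdd_smul c⁻¹
    (φ := fun x : S × T => ((√‖p x.1‖ * √‖q x.2‖ : ℝ) : ℂ) / (p x.1 - q x.2))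
    (Measurable.aestronglyMeasurable (by fun_prop)) (hsep.mono fun x hx =>
      norm_sqrt_norm_mul_sqrt_norm_div_sub_le hc hx.2.2)).congr (hsep.mono fun x hx => ?_)
  obtain ⟨hp₀, hq₀, -⟩ := hx
  have hp₁ : ((√‖p x.1‖ : ℝ) : ℂ) ≠ 0 :=
    ofReal_ne_zero.2 (Real.sqrt_ne_zero'.2 (norm_pos_iff.2 hp₀))
  have hq₁ : ((√‖q x.2‖ : ℝ) : ℂ) ≠ 0 :=
    ofReal_ne_zero.2 (Real.sqrt_ne_zero'.2 (norm_pos_iff.2 hq₀))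
  simp only [Pi.smul_apply', ← Complex.coe_smul, smul_smul, smul_eq_mul]
  congr 1
  push_cast
  field_simp

theorem smul_mul_smul_eq_of_sub_eq {x y : A} {a b z w : ℂ} (hne : z ≠ w)
    (h : x - y = (w - z) • (x * y)) :
    (a • x) * (b • y) = (b / (w - z)) • a • x + (a / (z - w)) • b • y := by
  have hzw : w - z ≠ 0 := sub_ne_zero.2 hne.symm
  have hxy : x * y = (w - z)⁻¹ • (x - y) := by rw [h, inv_smul_smul₀ hzw]
  rw [smul_mul_smul_comm, hxy, ← neg_sub w z, div_neg]
  simp only [div_eq_mul_inv]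
  module

theorem integral_smul_mul_integral_smul [SFinite μ] [SFinite ν] [CompleteSpace A]
    {a : S → ℂ} {b : T → ℂ} {P : S → A} {Q : T → A}
    (ha : Integrable (fun s => a s • P s) μ) (hb : Integrable (fun t => b t • Q t) ν)
    (hP : Integrable (fun x : S × T => (b x.2 / (q x.2 - p x.1)) • a x.1 • P x.1) (μ.prod ν))
    (hQ : Integrable (fun x : S × T => (a x.1 / (p x.1 - q x.2)) • b x.2 • Q x.2) (μ.prod ν))
    (hPQ : ∀ᵐ x ∂μ.prod ν, p x.1 ≠ q x.2 ∧
      P x.1 - Q x.2 = (q x.2 - p x.1) • (P x.1 * Q x.2)) :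
    (∫ s, a s • P s ∂μ) * ∫ t, b t • Q t ∂ν =
      (∫ s, (∫ t, b t / (q t - p s) ∂ν) • a s • P s ∂μ) +
        ∫ t, (∫ s, a s / (p s - q t) ∂μ) • b t • Q t ∂ν := by
  calc (∫ s, a s • P s ∂μ) * ∫ t, b t • Q t ∂ν
      = ∫ x, (a x.1 • P x.1) * (b x.2 • Q x.2) ∂μ.prod ν :=
        (integral_prod_bilin (ContinuousLinearMap.mul ℂ A) ha hb).symm
    _ = ∫ x, ((b x.2 / (q x.2 - p x.1)) • a x.1 • P x.1 +
          (a x.1 / (p x.1 - q x.2)) • b x.2 • Q x.2) ∂μ.prod ν :=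
        integral_congr_ae (hPQ.mono fun x hx => smul_mul_smul_eq_of_sub_eq hx.1 hx.2)
    _ = _ := by
        rw [integral_add hP hQ, integral_prod _ hP, integral_prod_symm _ hQ]
        simp only [integral_smul_const]

end Fubini

section Contour

variable {E : Type*} [NormedAddCommGroup E] [NormedSpace ℂ E] {F : ℂ → E} {θ ε M : ℝ}

/-- The integrand of the contour integral `∫ F(λ) dλ` over `Γ_{θ,ε}`. -/
def contourIntegrand (F : ℂ → E) (θ ε t : ℝ) : E :=
  gammaDeriv θ ε t • F (gammaCurve θ ε t)

theorem exp_two_pi_sub_mul_I (θ : ℝ) : exp ((2 * π - θ : ℝ) * I) = exp (-(θ : ℂ) * I) := by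
  rw [← exp_periodic (-(θ : ℂ) * I)]
  congr 1
  push_cast
  ring

theorem eqOn_contourIntegrand_Ioi (hε : 0 ≤ ε) :
    EqOn (contourIntegrand F θ ε) (fun t => exp (θ * I) • F (t * exp (θ * I))) (Ioi ε) := by
  intro t (ht : ε < t)
  simp only [contourIntegrand, gammaDeriv, gammaCurve, if_neg (show ¬t ≤ -ε by linarith),
    if_neg (show ¬t < ε by linarith)]

theorem eqOn_contourIntegrand_Iic :
    EqOn (contourIntegrand F θ ε) (fun t => -(exp ((2 * π - θ : ℝ) * I) •
      F ((-t : ℝ) * exp ((2 * π - θ : ℝ) * I)))) (Iic (-ε)) := by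
  intro t (ht : t ≤ -ε)
  simp only [contourIntegrand, gammaDeriv, gammaCurve, if_pos ht, exp_two_pi_sub_mul_I, neg_smul,
    ofReal_neg]

theorem exp_log_add_mul_I (hε : 0 < ε) (y : ℝ) :
    exp (Real.log ε + y * I) = ε * exp (y * I) := by
  rw [exp_add, ← ofReal_exp, Real.exp_log hε]

theorem eqOn_contourIntegrand_Ioo (hε : 0 < ε) :
    EqOn (contourIntegrand F θ ε) (fun t => -I • ((π - θ) / ε) •
      expPullback F (Real.log ε + (π - (π - θ) / ε * t : ℝ) * I)) (Ioo (-ε) ε) := by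
  intro t ⟨ht₁, ht₂⟩
  have harg : exp (I * ((-(t * (π - θ) / ε) - π : ℝ) : ℂ)) =
      exp ((π - (π - θ) / ε * t : ℝ) * I) := by
    rw [← exp_periodic (I * _)]
    congr 1
    push_cast
    ring
  have hε' : (ε : ℂ) ≠ 0 := ofReal_ne_zero.2 hε.ne'
  simp only [contourIntegrand, gammaDeriv, gammaCurve, if_neg (show ¬t ≤ -ε by linarith),
    if_pos ht₂, harg, expPullback, exp_log_add_mul_I hε, ← Complex.coe_smul, smul_smul]
  congr 1
  push_cast
  field_simp

theorem integrableOn_contourIntegrand_Ioi (hε : 0 ≤ ε) (hF : RayIntegrable F θ) :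
    IntegrableOn (contourIntegrand F θ ε) (Ioi ε) :=
  (hF.integrableOn_exp_smul.mono_set (Ioi_subset_Ioi hε)).congr_fun
    (eqOn_contourIntegrand_Ioi hε).symm measurableSet_Ioi

theorem integrableOn_contourIntegrand_Iic (hε : 0 ≤ ε) (hF : RayIntegrable F (2 * π - θ)) :
    IntegrableOn (contourIntegrand F θ ε) (Iic (-ε)) := by
  have := hF.integrableOn_exp_smul.mono_set (Ioi_subset_Ioi hε)
  rw [← integrableOn_Ici_iff_integrableOn_Ioi, ← neg_neg ε] at this
  exact this.comp_neg_Iic.neg.congr_fun eqOn_contourIntegrand_Iic.symm measurableSet_Iic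

theorem integral_Iic_contourIntegrand :
    ∫ t in Iic (-ε), contourIntegrand F θ ε t =
      -∫ t in Ioi ε, exp ((2 * π - θ : ℝ) * I) • F (t * exp ((2 * π - θ : ℝ) * I)) := by
  rw [setIntegral_congr_fun measurableSet_Iic eqOn_contourIntegrand_Iic, integral_neg,
    integral_comp_neg_Iic (-ε) fun t : ℝ =>
      exp ((2 * π - θ : ℝ) * I) • F (t * exp ((2 * π - θ : ℝ) * I)), neg_neg]

theorem integrable_contourIntegrand_zero (h₁ : RayIntegrable F θ)
    (h₂ : RayIntegrable F (2 * π - θ)) : Integrable (contourIntegrand F θ 0) := by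
  have hneg := integrableOn_contourIntegrand_Iic le_rfl h₂
  rw [neg_zero] at hneg
  rw [← integrableOn_univ, ← Iic_union_Ioi (a := (0 : ℝ))]
  exact hneg.union (integrableOn_contourIntegrand_Ioi le_rfl h₁)

theorem image_exp_Iic_log (hε : 0 < ε) : Real.exp '' Iic (Real.log ε) = Ioc 0 ε := by
  ext t
  constructor
  · rintro ⟨x, hx, rfl⟩
    exact ⟨Real.exp_pos x, (Real.le_log_iff_exp_le hε).1 hx⟩
  · exact fun ⟨ht₀, ht⟩ => ⟨Real.log t, Real.log_le_log ht₀ ht, Real.exp_log ht₀⟩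

theorem tendsto_smul_nhds_zero_of_norm_le {U : Set ℂ} (hε : 0 < ε)
    (hM : ∀ z ∈ U, ‖z‖ ≤ ε → ‖F z‖ ≤ M) :
    Tendsto (fun z => z • F z) (𝓝[≠] 0 ⊓ 𝓟 U) (𝓝 0) := by
  have hnear : ∀ᶠ z : ℂ in 𝓝[≠] 0, ‖z‖ ≤ ε :=
    nhdsWithin_le_nhds ((continuous_norm.tendsto' 0 0 norm_zero).eventually_le_const hε)
  refine squeeze_zero_norm' (a := fun z => ‖z‖ * M) (eventually_inf_principal.2 ?_) ?_
  · filter_upwards [hnear] with z hz hzU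
    rw [norm_smul]
    gcongr
    exact hM z hzU hz
  · refine Tendsto.mono_left ?_ (inf_le_left.trans nhdsWithin_le_nhds)
    exact Continuous.tendsto' (by fun_prop) _ _ (by simp)

theorem integral_arc_expPullback (hε : 0 < ε)
    (hF : DifferentiableOn ℂ F {z ∈ sector [[θ, 2 * π - θ]] | ‖z‖ ≤ ε})
    (hM : ∀ z ∈ sector [[θ, 2 * π - θ]], ‖z‖ ≤ ε → ‖F z‖ ≤ M)
    (h₁ : RayIntegrable F θ) (h₂ : RayIntegrable F (2 * π - θ)) :
    I • ∫ y in θ..(2 * π - θ), expPullback F (Real.log ε + y * I) =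
      (∫ t in Ioc 0 ε, exp ((2 * π - θ : ℝ) * I) • F (t * exp ((2 * π - θ : ℝ) * I))) -
        ∫ t in Ioc 0 ε, exp (θ * I) • F (t * exp (θ * I)) := by
  rw [← image_exp_Iic_log hε, ← setIntegral_expPullback F _ measurableSet_Iic,
    ← setIntegral_expPullback F _ measurableSet_Iic]
  refine (integral_Iic_sub_eq_vertical (differentiableOn_expPullback hF fun w hw => ?_)
    (tendsto_expPullback tendsto_exp_comap_re_atBot_nhdsNE
      (tendsto_smul_nhds_zero_of_norm_le hε hM)) h₁.expPullback.integrableOn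
    h₂.expPullback.integrableOn).symm
  refine ⟨mem_image_of_mem exp hw.2, ?_⟩
  rw [norm_exp]
  exact (Real.le_log_iff_exp_le hε).1 hw.1

theorem integral_Ioc_contourIntegrand (hε : 0 < ε) :
    ∫ t in Ioc (-ε) ε, contourIntegrand F θ ε t =
      -(I • ∫ y in θ..(2 * π - θ), expPullback F (Real.log ε + y * I)) := by
  have hlower : π - (π - θ) / ε * ε = θ := by rw [div_mul_cancel₀ _ hε.ne', sub_sub_cancel]
  have hupper : π - (π - θ) / ε * -ε = 2 * π - θ := by
    rw [mul_neg, div_mul_cancel₀ _ hε.ne']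
    ring
  rw [integral_Ioc_eq_integral_Ioo, setIntegral_congr_fun measurableSet_Ioo
    (eqOn_contourIntegrand_Ioo hε), ← integral_Ioc_eq_integral_Ioo,
    ← intervalIntegral.integral_of_le (by linarith), intervalIntegral.integral_smul,
    intervalIntegral.integral_smul, intervalIntegral.smul_integral_comp_sub_mul
      (fun y : ℝ => expPullback F (Real.log ε + y * I)), hlower, hupper, neg_smul]

theorem integrableOn_contourIntegrand_Ioc (hε : 0 < ε) (hθ : θ ≤ π)
    (hF : ContinuousOn F {z ∈ sector [[θ, 2 * π - θ]] | ‖z‖ ≤ ε}) :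
    IntegrableOn (contourIntegrand F θ ε) (Ioc (-ε) ε) := by
  have hmaps : ∀ t ∈ Icc (-ε) ε,
      ε * exp ((π - (π - θ) / ε * t : ℝ) * I) ∈ {z ∈ sector [[θ, 2 * π - θ]] | ‖z‖ ≤ ε} := by
    intro t ⟨ht₁, ht₂⟩
    have hd : 0 ≤ (π - θ) / ε := div_nonneg (by linarith) hε.le
    have hdε : (π - θ) / ε * ε = π - θ := div_mul_cancel₀ _ hε.ne'
    refine ⟨mul_exp_mem_sector (Icc_subset_uIcc ⟨?_, ?_⟩) hε, (norm_ofReal_mul_exp hε.le).le⟩ <;>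
      nlinarith
  rw [integrableOn_Ioc_iff_integrableOn_Ioo]
  refine IntegrableOn.congr_fun ?_ (eqOn_contourIntegrand_Ioo hε).symm measurableSet_Ioo
  simp only [expPullback, exp_log_add_mul_I hε]
  refine (ContinuousOn.integrableOn_Icc ?_).mono_set Ioo_subset_Icc_self
  have hcurve : Continuous fun t : ℝ => (ε * exp ((π - (π - θ) / ε * t : ℝ) * I) : ℂ) := by
    fun_prop
  exact ((hcurve.continuousOn.smul (hF.comp hcurve.continuousOn hmaps)).const_smul _).const_smul _

theorem integral_contourIntegrand_zero (h₁ : RayIntegrable F θ)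
    (h₂ : RayIntegrable F (2 * π - θ)) :
    ∫ t, contourIntegrand F θ 0 t = sectorIntegral F θ := by
  have hneg := integrableOn_contourIntegrand_Iic le_rfl h₂
  have hneg' := integral_Iic_contourIntegrand (F := F) (θ := θ) (ε := 0)
  rw [neg_zero] at hneg hneg'
  rw [← intervalIntegral.integral_Iic_add_Ioi hneg (integrableOn_contourIntegrand_Ioi le_rfl h₁),
    hneg', setIntegral_congr_fun measurableSet_Ioi (eqOn_contourIntegrand_Ioi le_rfl),
    neg_add_eq_sub]
  rfl

theorem setIntegral_Ioc_add_Ioi_eq_rayIntegral {φ : ℝ} (hε : 0 ≤ ε) (hF : RayIntegrable F φ) :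
    (∫ t in Ioc 0 ε, exp (φ * I) • F (t * exp (φ * I))) +
      ∫ t in Ioi ε, exp (φ * I) • F (t * exp (φ * I)) = rayIntegral F φ := by
  rw [rayIntegral, ← Ioc_union_Ioi_eq_Ioi hε, setIntegral_union (Ioc_disjoint_Ioi le_rfl)
    measurableSet_Ioi (hF.integrableOn_exp_smul.mono_set Ioc_subset_Ioi_self)
    (hF.integrableOn_exp_smul.mono_set (Ioi_subset_Ioi hε))]

theorem integral_contourIntegrand_of_pos (hε : 0 < ε) (hθ : θ ≤ π)
    (hF : DifferentiableOn ℂ F {z ∈ sector [[θ, 2 * π - θ]] | ‖z‖ ≤ ε})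
    (hM : ∀ z ∈ sector [[θ, 2 * π - θ]], ‖z‖ ≤ ε → ‖F z‖ ≤ M)
    (h₁ : RayIntegrable F θ) (h₂ : RayIntegrable F (2 * π - θ)) :
    ∫ t, contourIntegrand F θ ε t = sectorIntegral F θ := by
  have hleft := integrableOn_contourIntegrand_Iic hε.le h₂
  have harc := integrableOn_contourIntegrand_Ioc hε hθ hF.continuousOn
  have hright := integrableOn_contourIntegrand_Ioi hε.le h₁
  have hunion := harc.union hright
  rw [Ioc_union_Ioi_eq_Ioi (by linarith)] at hunion
  rw [← intervalIntegral.integral_Iic_add_Ioi hleft hunion,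
    ← Ioc_union_Ioi_eq_Ioi (by linarith : -ε ≤ ε),
    setIntegral_union (Ioc_disjoint_Ioi le_rfl) measurableSet_Ioi harc hright,
    integral_Iic_contourIntegrand, integral_Ioc_contourIntegrand hε,
    integral_arc_expPullback hε hF hM h₁ h₂,
    setIntegral_congr_fun measurableSet_Ioi (eqOn_contourIntegrand_Ioi hε.le), sectorIntegral,
    ← setIntegral_Ioc_add_Ioi_eq_rayIntegral hε.le h₁,
    ← setIntegral_Ioc_add_Ioi_eq_rayIntegral hε.le h₂]
  abel

end Contour

section FunctionalCalculus

variable {A : Type*} [NormedRing A] [NormedAlgebra ℂ A] {f g : ℂ → ℂ} {R : ℂ → A} {U : Set ℂ}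
  {θ θ₀ : ℝ}

/-- A holomorphic pseudo-resolvent on `U` with values in a normed algebra, uniformly bounded on
`U`. -/
structure IsBoundedPseudoResolventOn (R : ℂ → A) (U : Set ℂ) : Prop where
  sub_eq : ∀ z ∈ U, ∀ w ∈ U, R z - R w = (w - z) • (R z * R w)
  differentiableOn : DifferentiableOn ℂ R U
  bounded : ∃ K, ∀ z ∈ U, ‖R z‖ ≤ K

/-- The bounded holomorphic functions on the open left half-plane that are integrable along its
rays from the origin, except possibly the negative real axis; `MemHaInf` asks for the same along
rays from every point `x ≤ 0`. -/
structure MemRayHInf (f : ℂ → ℂ) : Prop where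
  differentiableOn : DifferentiableOn ℂ f {z | z.re < 0}
  bounded : ∃ M, ∀ z : ℂ, z.re < 0 → ‖f z‖ ≤ M
  rayIntegrable : ∀ φ ∈ Ioo (π / 2) π, RayIntegrable f φ ∧ RayIntegrable f (2 * π - φ)

theorem RayIntegrable.smul_bounded {E : Type*} [NormedAddCommGroup E] [NormedSpace ℂ E] {φ M : ℝ}
    {G : ℂ → E} (hf : RayIntegrable f φ) (hG : ContinuousOn G (sector {φ}))
    (hM : ∀ z ∈ sector {φ}, ‖G z‖ ≤ M) : RayIntegrable (fun z => f z • G z) φ := by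
  refine Integrable.smul_bdd hf M (ContinuousOn.aestronglyMeasurable ?_ measurableSet_Ioi)
    ((ae_restrict_mem measurableSet_Ioi).mono fun t ht => hM _ (mul_exp_mem_sector rfl ht))
  exact hG.comp (by fun_prop) fun t ht => mul_exp_mem_sector rfl ht

theorem integrableOn_Ioi_inv_sqrt_smul {E : Type*} [NormedAddCommGroup E] [NormedSpace ℝ E]
    {u : ℝ → E} {M : ℝ} (hu : IntegrableOn u (Ioi 0)) (hM : ∀ t ∈ Ioi 0, ‖u t‖ ≤ M) :
    IntegrableOn (fun t => (√t)⁻¹ • u t) (Ioi 0) := by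
  rw [← Ioc_union_Ioi_eq_Ioi zero_le_one]
  refine IntegrableOn.union ?_ ?_
  · have hrpow : IntegrableOn (fun t : ℝ => t ^ (-(1 / 2) : ℝ)) (Ioc 0 1) :=
      (intervalIntegral.intervalIntegrable_rpow' (by norm_num)).1
    have hsqrt : IntegrableOn (fun t : ℝ => (√t)⁻¹) (Ioc 0 1) :=
      hrpow.congr_fun (fun t ht => by
        simp only [Real.rpow_neg ht.1.le, Real.sqrt_eq_rpow]) measurableSet_Ioc
    exact Integrable.smul_bdd hsqrt M (hu.mono_set Ioc_subset_Ioi_self).aestronglyMeasurable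
      ((ae_restrict_mem measurableSet_Ioc).mono fun t ht => hM t ht.1)
  · refine Integrable.bdd_smul (hu.mono_set (Ioi_subset_Ioi zero_le_one)) 1
      (Measurable.aestronglyMeasurable (by fun_prop))
      ((ae_restrict_mem measurableSet_Ioi).mono fun t ht => ?_)
    rw [norm_inv, Real.norm_of_nonneg (Real.sqrt_nonneg t)]
    exact inv_le_one_of_one_le₀ (Real.one_le_sqrt.2 (le_of_lt ht))

theorem RayIntegrable.inv_sqrt_norm_smul {E : Type*} [NormedAddCommGroup E] [NormedSpace ℂ E]
    {F : ℂ → E} {φ M : ℝ} (hF : RayIntegrable F φ) (hM : ∀ z ∈ sector {φ}, ‖F z‖ ≤ M) :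
    RayIntegrable (fun z => (√‖z‖)⁻¹ • F z) φ :=
  (integrableOn_Ioi_inv_sqrt_smul hF fun t ht => hM _ (mul_exp_mem_sector rfl ht)).congr_fun
    (fun t ht => by simp only [norm_ofReal_mul_exp (le_of_lt ht)]) measurableSet_Ioi

theorem gammaCurve_zero_mem_sector (θ : ℝ) {t : ℝ} (ht : t ≠ 0) :
    gammaCurve θ 0 t ∈ sector {θ, 2 * π - θ} := by
  rcases ht.lt_or_gt with ht | ht
  · rw [gammaCurve, if_pos (by linarith), ← exp_two_pi_sub_mul_I, ← ofReal_neg]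
    exact mul_exp_mem_sector (by simp) (neg_pos.2 ht)
  · rw [gammaCurve, if_neg (by linarith), if_neg (by linarith)]
    exact mul_exp_mem_sector (by simp) ht

theorem measurable_gammaCurve (θ ε : ℝ) : Measurable (gammaCurve θ ε) :=
  .ite measurableSet_Iic (by fun_prop) (.ite measurableSet_Iio (by fun_prop) (by fun_prop))

theorem contourIntegrand_smul {𝕜 E : Type*} [NormedAddCommGroup E] [NormedSpace ℂ E] [SMul 𝕜 E]
    [SMulCommClass ℂ 𝕜 E] (c : ℂ → 𝕜) (F : ℂ → E) (θ ε t : ℝ) :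
    contourIntegrand (fun z => c z • F z) θ ε t =
      c (gammaCurve θ ε t) • contourIntegrand F θ ε t :=
  smul_comm _ _ _

theorem contourIntegrand_smul' {E : Type*} [NormedAddCommGroup E] [NormedSpace ℂ E] (f : ℂ → ℂ)
    (F : ℂ → E) (θ ε t : ℝ) : contourIntegrand (fun z => f z • F z) θ ε t =
      contourIntegrand f θ ε t • F (gammaCurve θ ε t) :=
  (smul_assoc _ _ _).symm

theorem uIcc_two_pi_sub_subset (hθ : π / 2 < θ) (hθ' : θ < π) :
    [[θ, 2 * π - θ]] ⊆ Ioo (π / 2) (3 * π / 2) := by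
  rw [uIcc_of_le (by linarith)]
  exact fun y hy => ⟨by linarith [hy.1], by linarith [hy.2]⟩

theorem pair_two_pi_sub_subset (hθ : θ ∈ Ioo (π / 2) π) :
    {θ, 2 * π - θ} ⊆ Ioo (π / 2) (3 * π / 2) :=
  (insert_subset left_mem_uIcc (singleton_subset_iff.2 right_mem_uIcc)).trans
    (uIcc_two_pi_sub_subset hθ.1 hθ.2)

theorem MemRayHInf.mul (hf : MemRayHInf f) (hg : MemRayHInf g) :
    MemRayHInf fun z => f z * g z := by
  obtain ⟨M, hM⟩ := hf.bounded
  obtain ⟨N, hN⟩ := hg.bounded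
  refine ⟨hf.differentiableOn.mul hg.differentiableOn, ⟨M * N, fun z hz => ?_⟩, fun φ hφ => ?_⟩
  · rw [norm_mul]
    exact mul_le_mul (hM z hz) (hN z hz) (norm_nonneg _) ((norm_nonneg _).trans (hM z hz))
  · have hre : ∀ ψ ∈ ({φ, 2 * π - φ} : Set ℝ), ∀ z ∈ sector {ψ}, z.re < 0 := fun ψ hψ z =>
      re_neg_of_mem_sector (singleton_subset_iff.2 (pair_two_pi_sub_subset hφ hψ))
    have hmul : ∀ ψ ∈ ({φ, 2 * π - φ} : Set ℝ), RayIntegrable f ψ →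
        RayIntegrable (fun z => f z * g z) ψ := fun ψ hψ hfψ =>
      hfψ.smul_bounded (hg.differentiableOn.continuousOn.mono (hre ψ hψ))
        fun z hz => hN z (hre ψ hψ z hz)
    exact (hf.rayIntegrable φ hφ).imp (hmul _ (by simp)) (hmul _ (by simp))

theorem integral_contourIntegrand_div_sub {w : ℂ} (h₁ : RayIntegrable f θ)
    (h₂ : RayIntegrable f (2 * π - θ)) (hw₁ : Real.cos (θ - w.im) < 1)
    (hw₂ : Real.cos (2 * π - θ - w.im) < 1) :
    ∫ t, contourIntegrand f θ 0 t / (gammaCurve θ 0 t - exp w) =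
      sectorIntegral (fun z => (z - exp w)⁻¹ • f z) θ := by
  rw [← integral_contourIntegrand_zero (h₁.inv_sub_smul hw₁) (h₂.inv_sub_smul hw₂)]
  refine integral_congr_ae (.of_forall fun t => ?_)
  dsimp only
  rw [contourIntegrand_smul fun z => (z - exp w)⁻¹, smul_eq_mul, div_eq_inv_mul]

theorem MemRayHInf.integral_contourIntegrand_div_sub_inside (hg : MemRayHInf g) (hθ₀ : π / 2 < θ₀)
    (hθ : θ ∈ Ioo θ₀ (2 * π - θ₀)) {l : ℂ} (hl : l ∈ sector {θ, 2 * π - θ}) :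
    ∫ t, contourIntegrand g θ₀ 0 t / (gammaCurve θ₀ 0 t - l) = 2 * π * I * g l := by
  obtain ⟨w, hw, rfl⟩ := hl
  obtain ⟨h₁, h₂⟩ := hθ
  obtain ⟨M, hM⟩ := hg.bounded
  have hw' : w.im ∈ Ioo θ₀ (2 * π - θ₀) := by
    rcases hw with h | (h : w.im = 2 * π - θ) <;> exact ⟨by linarith, by linarith⟩
  obtain ⟨hray₁, hray₂⟩ := hg.rayIntegrable θ₀ ⟨hθ₀, by linarith⟩
  have hcos : ∀ y ∈ ({θ₀, 2 * π - θ₀} : Set ℝ), Real.cos (y - w.im) < 1 := by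
    rintro y (rfl | rfl) <;> refine cos_lt_one_of_ne_zero ?_ (abs_lt.2 ⟨?_, ?_⟩) <;>
      linarith [hw'.1, hw'.2]
  rw [integral_contourIntegrand_div_sub hray₁ hray₂ (hcos _ (by simp)) (hcos _ (by simp))]
  exact sectorIntegral_inv_sub_smul hθ₀ hg.differentiableOn hM hray₁ hray₂ hw'

theorem MemRayHInf.integral_contourIntegrand_div_sub_outside (hf : MemRayHInf f) (hθ : π / 2 < θ)
    (hθ' : θ < π) (hθ₀ : θ₀ ∈ Ioo 0 θ) {l : ℂ} (hl : l ∈ sector {θ₀, 2 * π - θ₀}) :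
    ∫ t, contourIntegrand f θ 0 t / (gammaCurve θ 0 t - l) = 0 := by
  obtain ⟨w, hw, rfl⟩ := hl
  obtain ⟨h₁, h₂⟩ := hθ₀
  obtain ⟨M, hM⟩ := hf.bounded
  have hre : ∀ z ∈ sector [[θ, 2 * π - θ]], z.re < 0 := fun z =>
    re_neg_of_mem_sector (uIcc_two_pi_sub_subset hθ hθ')
  obtain ⟨hray₁, hray₂⟩ := hf.rayIntegrable θ ⟨hθ, hθ'⟩
  have hcos : ∀ y ∈ [[θ, 2 * π - θ]], Real.cos (y - w.im) < 1 := by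
    intro y hy
    rw [uIcc_of_le (by linarith)] at hy
    rcases hw with h | (h : w.im = 2 * π - θ₀) <;>
      refine cos_lt_one_of_ne_zero ?_ (abs_lt.2 ⟨?_, ?_⟩) <;> linarith [hy.1, hy.2]
  rw [integral_contourIntegrand_div_sub hray₁ hray₂ (hcos _ left_mem_uIcc)
    (hcos _ right_mem_uIcc), sectorIntegral]
  exact sub_eq_zero.2 <| rayIntegral_inv_sub_smul_eq (abs_lt.2 ⟨by linarith, by linarith⟩)
    (hf.differentiableOn.mono hre) (fun z hz => hM z (hre z hz)) hray₁ hray₂ hcos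

theorem MemRayHInf.exists_norm_smul_le {E : Type*} [NormedAddCommGroup E] [NormedSpace ℂ E]
    (hf : MemRayHInf f) {G : ℂ → E} {V : Set ℂ} {K : ℝ} (hV : ∀ z ∈ V, z.re < 0)
    (hK : ∀ z ∈ V, ‖G z‖ ≤ K) : ∃ M, ∀ z ∈ V, ‖f z • G z‖ ≤ M := by
  obtain ⟨M, hM⟩ := hf.bounded
  refine ⟨M * K, fun z hz => ?_⟩
  rw [norm_smul]
  exact mul_le_mul (hM z (hV z hz)) (hK z hz) (norm_nonneg _)
    ((norm_nonneg _).trans (hM z (hV z hz)))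

theorem exists_pos_mul_norm_add_norm_le_norm_sub_of_lt (hθ : 0 < θ₀) (h : θ₀ < θ) (hθ' : θ < π) :
    ∃ c > 0, ∀ z ∈ sector {θ, 2 * π - θ}, ∀ q ∈ sector {θ₀, 2 * π - θ₀},
      c * (‖z‖ + ‖q‖) ≤ ‖z - q‖ := by
  refine exists_pos_mul_norm_add_norm_le_norm_sub (toFinite _).isCompact (toFinite _).isCompact ?_
  rintro x (rfl | rfl) y (rfl | rfl) <;>
    exact cos_lt_one_of_ne_zero (by linarith) (abs_lt.2 ⟨by linarith, by linarith⟩)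

theorem ne_zero_of_mem_sector {s : Set ℝ} {z : ℂ} (hz : z ∈ sector s) : z ≠ 0 := by
  obtain ⟨w, -, rfl⟩ := hz
  exact exp_ne_zero w

theorem sector_mono {s t : Set ℝ} (h : s ⊆ t) : sector s ⊆ sector t :=
  image_mono (preimage_mono h)

theorem MemRayHInf.rayIntegrable_smul (hf : MemRayHInf f) (hR : IsBoundedPseudoResolventOn R U)
    (hθ : θ ∈ Ioo (π / 2) π) (hU : sector {θ, 2 * π - θ} ⊆ U) :
    RayIntegrable (fun z => f z • R z) θ ∧ RayIntegrable (fun z => f z • R z) (2 * π - θ) := by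
  obtain ⟨K, hK⟩ := hR.bounded
  have hsub : ∀ φ ∈ ({θ, 2 * π - θ} : Set ℝ), RayIntegrable f φ →
      RayIntegrable (fun z => f z • R z) φ := fun φ hφ hfφ =>
    have hφU : sector {φ} ⊆ U := (sector_mono (singleton_subset_iff.2 hφ)).trans hU
    hfφ.smul_bounded (hR.differentiableOn.continuousOn.mono hφU) fun z hz => hK z (hφU hz)
  exact (hf.rayIntegrable θ hθ).imp (hsub _ (by simp)) (hsub _ (by simp))

theorem ae_gammaCurve_zero_mem_sector (θ : ℝ) :
    ∀ᵐ t, gammaCurve θ 0 t ∈ sector {θ, 2 * π - θ} :=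
  (Measure.ae_ne volume 0).mono fun _ ht => gammaCurve_zero_mem_sector θ ht

theorem integrable_contourIntegrand_inv_sqrt_norm_smul {E : Type*} [NormedAddCommGroup E]
    [NormedSpace ℂ E] {F : ℂ → E} {M : ℝ} (h₁ : RayIntegrable F θ)
    (h₂ : RayIntegrable F (2 * π - θ)) (hM : ∀ z ∈ sector {θ, 2 * π - θ}, ‖F z‖ ≤ M) :
    Integrable (fun t => (√‖gammaCurve θ 0 t‖)⁻¹ • contourIntegrand F θ 0 t) := by
  simp only [← contourIntegrand_smul fun z => (√‖z‖)⁻¹]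
  have hsub : ∀ φ ∈ ({θ, 2 * π - θ} : Set ℝ), ∀ z ∈ sector {φ}, ‖F z‖ ≤ M := fun φ hφ z hz =>
    hM z (sector_mono (singleton_subset_iff.2 hφ) hz)
  exact integrable_contourIntegrand_zero (h₁.inv_sqrt_norm_smul (hsub _ (by simp)))
    (h₂.inv_sqrt_norm_smul (hsub _ (by simp)))

theorem integrable_contourIntegrand_div_sub_smul {E : Type*} [NormedAddCommGroup E]
    [NormedSpace ℂ E] {F : ℂ → E} {α β c : ℝ} (hc : 0 < c)
    (hsep : ∀ z ∈ sector {α, 2 * π - α}, ∀ q ∈ sector {β, 2 * π - β}, c * (‖z‖ + ‖q‖) ≤ ‖z - q‖)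
    (hf : Integrable fun t => (√‖gammaCurve α 0 t‖)⁻¹ • contourIntegrand f α 0 t)
    (hF : Integrable fun t => (√‖gammaCurve β 0 t‖)⁻¹ • contourIntegrand F β 0 t) :
    Integrable (fun x : ℝ × ℝ => (contourIntegrand f α 0 x.1 /
      (gammaCurve α 0 x.1 - gammaCurve β 0 x.2)) • contourIntegrand F β 0 x.2)
      (volume.prod volume) := by
  refine integrable_div_sub_smul hc (measurable_gammaCurve α 0) (measurable_gammaCurve β 0) hf hF ?_
  filter_upwards [Measure.quasiMeasurePreserving_fst.ae (ae_gammaCurve_zero_mem_sector α),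
    Measure.quasiMeasurePreserving_snd.ae (ae_gammaCurve_zero_mem_sector β)] with x hα hβ
  exact ⟨ne_zero_of_mem_sector hα, ne_zero_of_mem_sector hβ, hsep _ hα _ hβ⟩

theorem MemRayHInf.integrable_inv_sqrt_norm_smul_contourIntegrand (hf : MemRayHInf f)
    (hθ : θ ∈ Ioo (π / 2) π) :
    Integrable (fun t => (√‖gammaCurve θ 0 t‖)⁻¹ • contourIntegrand f θ 0 t) := by
  obtain ⟨M, hM⟩ := hf.bounded
  obtain ⟨h₁, h₂⟩ := hf.rayIntegrable θ hθ
  exact integrable_contourIntegrand_inv_sqrt_norm_smul h₁ h₂ fun z hz =>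
    hM z (re_neg_of_mem_sector (pair_two_pi_sub_subset hθ) hz)

theorem MemRayHInf.integrable_inv_sqrt_norm_smul_contourIntegrand_smul (hf : MemRayHInf f)
    (hR : IsBoundedPseudoResolventOn R U) (hθ : θ ∈ Ioo (π / 2) π)
    (hU : sector {θ, 2 * π - θ} ⊆ U) :
    Integrable fun t =>
      (√‖gammaCurve θ 0 t‖)⁻¹ • contourIntegrand (fun z => f z • R z) θ 0 t := by
  obtain ⟨K, hK⟩ := hR.bounded
  obtain ⟨M, hM⟩ := hf.exists_norm_smul_le (G := R) (V := sector {θ, 2 * π - θ})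
    (fun z => re_neg_of_mem_sector (pair_two_pi_sub_subset hθ)) fun z hz => hK z (hU hz)
  obtain ⟨h₁, h₂⟩ := hf.rayIntegrable_smul hR hθ hU
  exact integrable_contourIntegrand_inv_sqrt_norm_smul h₁ h₂ hM

theorem IsBoundedPseudoResolventOn.integral_mul_integral [CompleteSpace A]
    (hR : IsBoundedPseudoResolventOn R U) (hf : MemRayHInf f) (hg : MemRayHInf g)
    (hθ₀ : θ₀ ∈ Ioo (π / 2) π) (hθ : θ ∈ Ioo (π / 2) π) (h : θ₀ < θ)
    (hU₀ : sector {θ₀, 2 * π - θ₀} ⊆ U) (hU : sector {θ, 2 * π - θ} ⊆ U) :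
    (∫ t, contourIntegrand f θ 0 t • R (gammaCurve θ 0 t)) *
        ∫ t, contourIntegrand g θ₀ 0 t • R (gammaCurve θ₀ 0 t) =
      (∫ s, (∫ t, contourIntegrand g θ₀ 0 t / (gammaCurve θ₀ 0 t - gammaCurve θ 0 s)) •
        contourIntegrand f θ 0 s • R (gammaCurve θ 0 s)) +
      ∫ t, (∫ s, contourIntegrand f θ 0 s / (gammaCurve θ 0 s - gammaCurve θ₀ 0 t)) •
        contourIntegrand g θ₀ 0 t • R (gammaCurve θ₀ 0 t) := by
  obtain ⟨c, hc, hsep⟩ := exists_pos_mul_norm_add_norm_le_norm_sub_of_lt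
    (by linarith [Real.pi_pos, hθ₀.1]) h hθ.2
  have hsep' : ∀ q ∈ sector {θ₀, 2 * π - θ₀}, ∀ z ∈ sector {θ, 2 * π - θ},
      c * (‖q‖ + ‖z‖) ≤ ‖q - z‖ := fun q hq z hz => by
    rw [add_comm, norm_sub_rev]
    exact hsep z hz q hq
  have hfR := hf.integrable_inv_sqrt_norm_smul_contourIntegrand_smul hR hθ hU
  have hgR := hg.integrable_inv_sqrt_norm_smul_contourIntegrand_smul hR hθ₀ hU₀
  have hfK := integrable_contourIntegrand_div_sub_smul hc hsep
    (hf.integrable_inv_sqrt_norm_smul_contourIntegrand hθ) hgR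
  have hgK := (integrable_contourIntegrand_div_sub_smul hc hsep'
    (hg.integrable_inv_sqrt_norm_smul_contourIntegrand hθ₀) hfR).swap
  obtain ⟨hf₁, hf₂⟩ := hf.rayIntegrable_smul hR hθ hU
  obtain ⟨hg₁, hg₂⟩ := hg.rayIntegrable_smul hR hθ₀ hU₀
  have hfi := integrable_contourIntegrand_zero hf₁ hf₂
  have hgi := integrable_contourIntegrand_zero hg₁ hg₂
  simp only [contourIntegrand_smul'] at hfK hgK
  refine integral_smul_mul_integral_smul (hfi.congr (.of_forall (contourIntegrand_smul' _ _ _ _)))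
    (hgi.congr (.of_forall (contourIntegrand_smul' _ _ _ _))) hgK hfK ?_
  filter_upwards [Measure.quasiMeasurePreserving_fst.ae (ae_gammaCurve_zero_mem_sector θ),
    Measure.quasiMeasurePreserving_snd.ae (ae_gammaCurve_zero_mem_sector θ₀)] with x hx hx₀
  have hpos := mul_pos hc (add_pos (norm_pos_iff.2 (ne_zero_of_mem_sector hx))
    (norm_pos_iff.2 (ne_zero_of_mem_sector hx₀)))
  exact ⟨sub_ne_zero.1 (norm_pos_iff.1 (hpos.trans_le (hsep _ hx _ hx₀))),
    hR.sub_eq _ (hU hx) _ (hU₀ hx₀)⟩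

theorem sectorIntegral_smul_mul_sectorIntegral_smul [CompleteSpace A]
    (hR : IsBoundedPseudoResolventOn R U) (hf : MemRayHInf f) (hg : MemRayHInf g)
    (hθ₀ : θ₀ ∈ Ioo (π / 2) π) (hθ : θ ∈ Ioo (π / 2) π) (h : θ₀ < θ)
    (hU₀ : sector {θ₀, 2 * π - θ₀} ⊆ U) (hU : sector {θ, 2 * π - θ} ⊆ U) :
    sectorIntegral (fun z => f z • R z) θ * sectorIntegral (fun z => g z • R z) θ₀ =
      (2 * π * I : ℂ) • sectorIntegral (fun z => (f z * g z) • R z) θ := by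
  obtain ⟨hf₁, hf₂⟩ := hf.rayIntegrable_smul hR hθ hU
  obtain ⟨hg₁, hg₂⟩ := hg.rayIntegrable_smul hR hθ₀ hU₀
  obtain ⟨hfg₁, hfg₂⟩ := (hf.mul hg).rayIntegrable_smul hR hθ hU
  have hinside : ∀ᵐ s, (∫ t, contourIntegrand g θ₀ 0 t / (gammaCurve θ₀ 0 t - gammaCurve θ 0 s)) •
      contourIntegrand f θ 0 s • R (gammaCurve θ 0 s) =
      (2 * π * I : ℂ) • contourIntegrand (fun z => (f z * g z) • R z) θ 0 s := by
    filter_upwards [ae_gammaCurve_zero_mem_sector θ] with s hs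
    rw [hg.integral_contourIntegrand_div_sub_inside hθ₀.1 ⟨h, by linarith [hθ.2, hθ₀.2]⟩ hs]
    simp only [contourIntegrand, smul_smul, smul_eq_mul]
    ring_nf
  have houtside : ∀ᵐ t, (∫ s, contourIntegrand f θ 0 s / (gammaCurve θ 0 s - gammaCurve θ₀ 0 t)) •
      contourIntegrand g θ₀ 0 t • R (gammaCurve θ₀ 0 t) = 0 := by
    filter_upwards [ae_gammaCurve_zero_mem_sector θ₀] with t ht
    rw [hf.integral_contourIntegrand_div_sub_outside hθ.1 hθ.2
      ⟨by linarith [Real.pi_pos, hθ₀.1], h⟩ ht, zero_smul]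
  rw [← integral_contourIntegrand_zero hf₁ hf₂, ← integral_contourIntegrand_zero hg₁ hg₂,
    ← integral_contourIntegrand_zero hfg₁ hfg₂]
  simp only [contourIntegrand_smul' f, contourIntegrand_smul' g]
  rw [hR.integral_mul_integral hf hg hθ₀ hθ h hU₀ hU, integral_congr_ae hinside,
    integral_eq_zero_of_ae houtside, add_zero, integral_smul]

theorem MemRayHInf.rayIntegral_smul_eq {α β : ℝ} (hf : MemRayHInf f)
    (hR : IsBoundedPseudoResolventOn R U) (hαβ : [[α, β]] ⊆ Ioo (π / 2) (3 * π / 2))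
    (hU : sector [[α, β]] ⊆ U) (hα : RayIntegrable (fun z => f z • R z) α)
    (hβ : RayIntegrable (fun z => f z • R z) β) :
    rayIntegral (fun z => f z • R z) α = rayIntegral (fun z => f z • R z) β := by
  obtain ⟨K, hK⟩ := hR.bounded
  have hre : ∀ z ∈ sector [[α, β]], z.re < 0 := fun z => re_neg_of_mem_sector hαβ
  obtain ⟨M, hM⟩ := hf.exists_norm_smul_le hre fun z hz => hK z (hU hz)
  obtain ⟨hα₁, hα₂⟩ := hαβ left_mem_uIcc
  obtain ⟨hβ₁, hβ₂⟩ := hαβ right_mem_uIcc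
  exact rayIntegral_eq_of_bounded (abs_lt.2 ⟨by linarith, by linarith⟩)
    ((hf.differentiableOn.mono hre).smul (hR.differentiableOn.mono hU)) hM hα hβ

theorem MemRayHInf.sectorIntegral_smul_eq (hf : MemRayHInf f)
    (hR : IsBoundedPseudoResolventOn R U) (hθ₀ : π / 2 < θ₀) (h : θ₀ ≤ θ) (hθ : θ < π)
    (hU : sector (Icc θ₀ θ ∪ Icc (2 * π - θ) (2 * π - θ₀)) ⊆ U) :
    sectorIntegral (fun z => f z • R z) θ₀ = sectorIntegral (fun z => f z • R z) θ := by
  have hends : ∀ φ ∈ Icc θ₀ θ, RayIntegrable (fun z => f z • R z) φ ∧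
      RayIntegrable (fun z => f z • R z) (2 * π - φ) := fun φ hφ =>
    hf.rayIntegrable_smul hR ⟨by linarith [hφ.1], by linarith [hφ.2]⟩ ((sector_mono
      (insert_subset (.inl hφ) (singleton_subset_iff.2
        (.inr ⟨by linarith [hφ.2], by linarith [hφ.1]⟩)))).trans hU)
  obtain ⟨hθ₀₁, hθ₀₂⟩ := hends θ₀ (left_mem_Icc.2 h)
  obtain ⟨hθ₁, hθ₂⟩ := hends θ (right_mem_Icc.2 h)
  have h' : 2 * π - θ ≤ 2 * π - θ₀ := by linarith
  rw [sectorIntegral, sectorIntegral]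
  congr 1
  · refine hf.rayIntegral_smul_eq hR ?_ ((sector_mono ?_).trans hU) hθ₀₁ hθ₁ <;>
      rw [uIcc_of_le h]
    exacts [fun y hy => ⟨by linarith [hy.1], by linarith [hy.2]⟩, subset_union_left]
  · refine hf.rayIntegral_smul_eq hR ?_ ((sector_mono ?_).trans hU) hθ₀₂ hθ₂ <;>
      rw [uIcc_of_ge h']
    exacts [fun y hy => ⟨by linarith [hy.1], by linarith [hy.2]⟩, subset_union_right]

end FunctionalCalculus

section Resolvent

variable {f g : ℂ → ℂ} {δ r θ ε : ℝ}

theorem RayIntegrable.of_integrableOn_norm {E : Type*} [NormedAddCommGroup E] {F : ℂ → E} {φ : ℝ}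
    (hF : ContinuousOn F (sector {φ}))
    (h : IntegrableOn (fun t : ℝ => ‖F (t * exp (φ * I))‖) (Ioi 0)) : RayIntegrable F φ := by
  refine (integrable_norm_iff (ContinuousOn.aestronglyMeasurable ?_ measurableSet_Ioi)).1 h
  exact hF.comp (by fun_prop) fun t ht => mul_exp_mem_sector rfl ht

theorem MemHaInf.memRayHInf (hf : MemHaInf f) : MemRayHInf f where
  differentiableOn := hf.holo
  bounded := hf.bdd
  rayIntegrable φ hφ := by
    have hcont : ∀ ψ ∈ ({φ, 2 * π - φ} : Set ℝ), ContinuousOn f (sector {ψ}) := fun ψ hψ =>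
      hf.holo.continuousOn.mono fun z =>
        re_neg_of_mem_sector (singleton_subset_iff.2 (pair_two_pi_sub_subset hφ hψ))
    refine ⟨.of_integrableOn_norm (hcont _ (by simp)) ?_,
      .of_integrableOn_norm (hcont _ (by simp)) ?_⟩
    · simpa only [ofReal_zero, zero_add] using hf.lineIntPlus 0 le_rfl φ hφ.1 hφ.2
    · simpa only [ofReal_zero, zero_add, exp_two_pi_sub_mul_I] using
        hf.lineIntMinus 0 le_rfl φ hφ.1 hφ.2

theorem IsPseudoResolvent.isBoundedPseudoResolventOn {X : Type*} [NormedAddCommGroup X]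
    [NormedSpace ℂ X] {R : ℂ → X →L[ℂ] X} {C : ℝ} (hR : IsPseudoResolvent R δ r C) :
    IsBoundedPseudoResolventOn R (resDom δ r) where
  sub_eq z hz w hw := hR.pseudo z w hz hw
  differentiableOn := hR.holo
  bounded := by
    obtain ⟨M, hM⟩ := hR.boundBall
    refine ⟨max M (C / r), fun z hz => ?_⟩
    rcases lt_or_ge ‖z‖ r with hzr | hrz
    · exact le_max_of_le_left (hM z hzr)
    · refine le_max_of_le_right ((hR.bound z (hz.resolve_right hrz.not_gt)).trans ?_)
      exact div_le_div_of_nonneg_left hR.hC.le hR.hr hrz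

theorem sector_subset_resDom (hδ : δ ≤ π / 2) {s : Set ℝ}
    (hs : ∀ y ∈ s, |y| < π / 2 + δ ∨ |y - 2 * π| < π / 2 + δ) : sector s ⊆ resDom δ r := by
  have hexp : ∀ w : ℂ, |w.im| < π / 2 + δ → exp w ∈ resDom δ r := fun w hw => by
    obtain ⟨h₁, h₂⟩ := abs_lt.1 hw
    refine .inl ⟨exp_ne_zero w, ?_⟩
    rwa [← log_im, log_exp (by linarith) (by linarith)]
  rintro _ ⟨w, hw, rfl⟩
  rcases hs _ hw with h | h
  · exact hexp w h
  · rw [← exp_periodic.sub_eq w]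
    exact hexp _ (by simpa using h)

theorem lt_of_gammaCurve_mem_resDom (hε : 0 < ε) (hδ : δ ≤ π / 2)
    (hc : gammaCurve θ ε 0 ∈ resDom δ r) : ε < r := by
  have hcurve : gammaCurve θ ε 0 = (-ε : ℝ) := by
    rw [gammaCurve, if_neg (by linarith), if_pos hε, zero_mul, zero_div, neg_zero, zero_sub,
      ofReal_neg, mul_neg, mul_comm I, exp_neg, exp_pi_mul_I]
    norm_num
  rw [hcurve] at hc
  rcases hc with ⟨-, harg⟩ | hlt
  · rw [arg_ofReal_of_neg (neg_neg_of_pos hε), abs_of_pos Real.pi_pos] at harg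
    linarith
  · rwa [mem_ofPred_eq, norm_real, norm_neg, Real.norm_of_nonneg hε.le] at hlt

variable {A : Type*} [NormedRing A] [NormedAlgebra ℂ A] {R : ℂ → A}

theorem MemRayHInf.integral_contourIntegrand_smul (hf : MemRayHInf f)
    (hR : IsBoundedPseudoResolventOn R (resDom δ r)) (hδ : δ ≤ π / 2) (hθ : π / 2 < θ)
    (hθ' : θ < π / 2 + δ) (hε : 0 ≤ ε) (hc : ∀ t, gammaCurve θ ε t ∈ resDom δ r) :
    ∫ t, contourIntegrand (fun z => f z • R z) θ ε t = sectorIntegral (fun z => f z • R z) θ := by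
  have hrays : sector {θ, 2 * π - θ} ⊆ resDom δ r := sector_subset_resDom hδ (by
    rintro y (rfl | rfl)
    exacts [.inl (abs_lt.2 ⟨by linarith, hθ'⟩), .inr (abs_lt.2 ⟨by linarith, by linarith⟩)])
  obtain ⟨h₁, h₂⟩ := hf.rayIntegrable_smul hR ⟨hθ, by linarith⟩ hrays
  rcases hε.eq_or_lt with rfl | hε
  · exact integral_contourIntegrand_zero h₁ h₂
  have hball : {z ∈ sector [[θ, 2 * π - θ]] | ‖z‖ ≤ ε} ⊆ resDom δ r := fun z hz =>
    .inr (hz.2.trans_lt (lt_of_gammaCurve_mem_resDom hε hδ (hc 0)))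
  have hre : {z ∈ sector [[θ, 2 * π - θ]] | ‖z‖ ≤ ε} ⊆ {z | z.re < 0} := fun z hz =>
    re_neg_of_mem_sector (uIcc_two_pi_sub_subset hθ (by linarith)) hz.1
  obtain ⟨K, hK⟩ := hR.bounded
  obtain ⟨M, hM⟩ := hf.exists_norm_smul_le hre fun z hz => hK z (hball hz)
  exact integral_contourIntegrand_of_pos hε (by linarith)
    ((hf.differentiableOn.mono hre).smul (hR.differentiableOn.mono hball))
    (fun z hz hzε => hM z ⟨hz, hzε⟩) h₁ h₂

theorem MemRayHInf.sectorIntegral_smul_mul [CompleteSpace A] (hf : MemRayHInf f)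
    (hg : MemRayHInf g) (hR : IsBoundedPseudoResolventOn R (resDom δ r)) (hδ : δ ≤ π / 2)
    (hθ : π / 2 < θ) (hθ' : θ < π / 2 + δ) :
    sectorIntegral (fun z => f z • R z) θ * sectorIntegral (fun z => g z • R z) θ =
      (2 * π * I : ℂ) • sectorIntegral (fun z => (f z * g z) • R z) θ := by
  obtain ⟨θ₀, hθ₀, h⟩ := exists_between hθ
  have hU : sector (Icc θ₀ θ ∪ Icc (2 * π - θ) (2 * π - θ₀)) ⊆ resDom δ r :=
    sector_subset_resDom hδ (by
      rintro y (⟨h₁, h₂⟩ | ⟨h₁, h₂⟩)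
      exacts [.inl (abs_lt.2 ⟨by linarith, by linarith⟩),
        .inr (abs_lt.2 ⟨by linarith, by linarith⟩)])
  have hpair : ∀ φ ∈ Icc θ₀ θ, sector {φ, 2 * π - φ} ⊆ resDom δ r := fun φ hφ =>
    (sector_mono (insert_subset (.inl hφ) (singleton_subset_iff.2
      (.inr ⟨by linarith [hφ.2], by linarith [hφ.1]⟩)))).trans hU
  rw [← hg.sectorIntegral_smul_eq hR hθ₀ h.le (by linarith) hU]
  exact sectorIntegral_smul_mul_sectorIntegral_smul hR hf hg ⟨hθ₀, by linarith⟩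
    ⟨hθ, by linarith⟩ h (hpair _ (left_mem_Icc.2 h.le)) (hpair _ (right_mem_Icc.2 h.le))

theorem stmt11_general [CompleteSpace A] (hR : IsBoundedPseudoResolventOn R (resDom δ r))
    (hf : MemRayHInf f) (hg : MemRayHInf g) (hδ : δ ≤ π / 2) (hθ : π / 2 < θ)
    (hθ' : θ < π / 2 + δ) (hε : 0 ≤ ε) (hc : ∀ t, gammaCurve θ ε t ∈ resDom δ r) :
    (((2 * π : ℝ) : ℂ) * I)⁻¹ •
      (∫ t, (f (gammaCurve θ ε t) * g (gammaCurve θ ε t) * gammaDeriv θ ε t) •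
        R (gammaCurve θ ε t)) =
    ((((2 * π : ℝ) : ℂ) * I)⁻¹ •
        ∫ t, (f (gammaCurve θ ε t) * gammaDeriv θ ε t) • R (gammaCurve θ ε t)) *
      ((((2 * π : ℝ) : ℂ) * I)⁻¹ •
        ∫ t, (g (gammaCurve θ ε t) * gammaDeriv θ ε t) • R (gammaCurve θ ε t)) := by
  have hcontour : ∀ {k : ℂ → ℂ}, MemRayHInf k →
      ∫ t, (k (gammaCurve θ ε t) * gammaDeriv θ ε t) • R (gammaCurve θ ε t) =
        sectorIntegral (fun z => k z • R z) θ := fun {k} hk => by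
    rw [← hk.integral_contourIntegrand_smul hR hδ hθ hθ' hε hc]
    simp only [contourIntegrand, smul_smul, mul_comm]
  rw [hcontour (hf.mul hg), hcontour hf, hcontour hg, smul_mul_smul_comm, mul_smul, ofReal_mul,
    ofReal_ofNat, hf.sectorIntegral_smul_mul hg hR hδ hθ hθ', inv_smul_smul₀ two_pi_I_ne_zero]

end Resolvent

end Development

/-- multiplicativity of the holomorphic functional calculus:
for `f, g ∈ H_a^∞`, with `f(A) = (2πi)⁻¹ ∫_{Γ_{θ,ε}} f(λ) R(λ) dλ` over an
admissible contour, one has `(f·g)(A) = f(A) ∘ g(A)`. -/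
theorem stmt11 (R : ℂ → X →L[ℂ] X) (δ r C : ℝ)
    (hR : IsPseudoResolvent R δ r C)
    (f g : ℂ → ℂ) (hf : MemHaInf f) (hg : MemHaInf g) (θ ε : ℝ)
    (hθ : Real.pi / 2 < θ) (hθ' : θ < Real.pi / 2 + δ) (hε : 0 ≤ ε)
    (hc : ∀ t : ℝ, gammaCurve θ ε t ∈ resDom δ r) :
    (((2 * Real.pi : ℝ) : ℂ) * Complex.I)⁻¹ •
      (∫ t : ℝ, (f (gammaCurve θ ε t) * g (gammaCurve θ ε t) * gammaDeriv θ ε t) •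
        R (gammaCurve θ ε t))
    = ((((2 * Real.pi : ℝ) : ℂ) * Complex.I)⁻¹ •
        (∫ t : ℝ, (f (gammaCurve θ ε t) * gammaDeriv θ ε t) • R (gammaCurve θ ε t))).comp
      ((((2 * Real.pi : ℝ) : ℂ) * Complex.I)⁻¹ •
        (∫ t : ℝ, (g (gammaCurve θ ε t) * gammaDeriv θ ε t) • R (gammaCurve θ ε t))) := 
  stmt11_general hR.isBoundedPseudoResolventOn hf.memRayHInf hg.memRayHInf hR.hδ.le hθ hθ' hε hc
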